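/- There exists ε₀ > 0 such that for every 0 < ε ≤ ε₀ and all θ₁, θ₂ ∈ ℝ, the sets X_{θ₁} ∩ B̄(0,ε) and X_{θ₂} ∩ B̄(0,ε) are homeomorphic; that is, all members of the canonical pencil of f are homeomorphic to one another inside a sufficiently small closed ball around the origin. -/

import Mathlib

/-!
All members of the pencil are moved onto each other inside a small ball by a flow. On `{f ≠ 0}`
near `0` there is a `C¹` vector field `w` that is tangent to all spheres around `0` and satisfies
`Df(w) = f · (ρ + i)` with `ρ` real, `|ρ| ≤ 2` (`exists_good`). Along the flow of `(θ₂ - θ₁) w` the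
norm of the point is constant, `arg f` turns with constant speed `θ₂ - θ₁`, and `|f|` stays within a
bounded factor of its initial value, so that trajectories exist up to time one and never reach
`V = {f = 0}`. The time-one map, extended by the identity to `V`, is the homeomorphism
(`Good.exists_map`, `Good.homeo`).

The field is `w = T / ‖T‖²`, where `T` is the part of `J = grad (arg f)` tangent to spheres. Two
inequalities for points `x` with `f x ≠ 0` make this work:

* `im_fderiv_self_le`: `|Im (Df(x) x · conj (f x))| ≤ δ ‖x‖ ‖Df(x)‖ |f x|` as `x → 0`, which says that
  the radial part of `J` is a small fraction of `J`. Hence `T ≠ 0` and `‖w‖ ‖Df‖ ≤ 2 |f|`.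
* `loja`: `|f| = o(‖Df‖)` at the zeros of `f`. Hence `w → 0` at `V`, which gives the continuity of
  the time-one map there.

Both are proved by contradiction. An ultrafilter of bad points converges, after adding coordinates
such as `x / ‖x‖` and `Df / ‖Df‖`, to a point of a larger space, and there is a complex analytic arc
through that point which satisfies all the holomorphic equations satisfied along the ultrafilter
(`exists_curve_map`). Along such an arc `t φ' / φ` tends to the vanishing order of `φ` at `t = 0`
(`logDeriv_limit`), for `φ` the value of `f` or the radial coordinate. These orders are
positive integers; that they are nonzero contradicts the failure of `loja`, and that they are real
contradicts the failure of `im_fderiv_self_le`.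

Curve selection (`curveSel`) goes by induction on the dimension. A nontrivial equation presents the
set as lying in a branched cover of a space of smaller dimension: its small zeros in one variable
form a multiset whose symmetric functions are holomorphic in the other variables (`small_zeros`,
`SymHol`). An arc in the base lifts to the cover after a ramified change of parameter by Puiseux's
theorem (`puiseux`).
-/

/-- The member `X_θ` of the canonical pencil of `f`. -/
def Xset {α : Type} (U : Set α) (f : α → ℂ) (θ : ℝ) : Set α :=
  {x ∈ U | ∃ t : ℝ, f x = t * Complex.exp (θ * Complex.I)}

open Filter Topology Metric Set MeasureTheory Polynomial

/-! ### Holomorphic germs -/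

section Germs

/-- Holomorphy of a germ: complex differentiability at all points near `x`. -/
def Hol {E F : Type*} [NormedAddCommGroup E] [NormedSpace ℂ E] [NormedAddCommGroup F]
    [NormedSpace ℂ F] (f : E → F) (x : E) : Prop :=
  ∀ᶠ y in 𝓝 x, DifferentiableAt ℂ f y

section Basic
variable {E F G : Type*} [NormedAddCommGroup E] [NormedSpace ℂ E] [NormedAddCommGroup F]
  [NormedSpace ℂ F] [NormedAddCommGroup G] [NormedSpace ℂ G]

lemma Hol.diff {f : E → F} {x : E} (h : Hol f x) : DifferentiableAt ℂ f x := h.self_of_nhds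

lemma Hol.cont {f : E → F} {x : E} (h : Hol f x) : ContinuousAt f x := h.diff.continuousAt

lemma Hol.ev {f : E → F} {x : E} (h : Hol f x) : ∀ᶠ y in 𝓝 x, Hol f y :=
  eventually_eventually_nhds.2 h

lemma Hol.congr {f g : E → F} {x : E} (h : Hol f x) (hfg : f =ᶠ[𝓝 x] g) : Hol g x := by
  have := eventually_eventually_nhds.2 hfg
  filter_upwards [h, this] with y hy hy'
  exact hy.congr_of_eventuallyEq (hy'.mono fun z hz => hz.symm)

lemma Hol.of_diff {f : E → F} (h : Differentiable ℂ f) (x : E) : Hol f x :=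
  Eventually.of_forall fun y => h y

lemma Hol.const (c : F) (x : E) : Hol (fun _ : E => c) x := Hol.of_diff (by fun_prop) x

lemma Hol.add {f g : E → F} {x : E} (hf : Hol f x) (hg : Hol g x) :
    Hol (fun y => f y + g y) x := by
  filter_upwards [hf, hg] with y h1 h2 using h1.add h2

lemma Hol.sub {f g : E → F} {x : E} (hf : Hol f x) (hg : Hol g x) :
    Hol (fun y => f y - g y) x := by
  filter_upwards [hf, hg] with y h1 h2 using h1.sub h2

lemma Hol.mul {f g : E → ℂ} {x : E} (hf : Hol f x) (hg : Hol g x) :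
    Hol (fun y => f y * g y) x := by
  filter_upwards [hf, hg] with y h1 h2 using h1.mul h2

lemma Hol.pow {f : E → ℂ} {x : E} (hf : Hol f x) (k : ℕ) :
    Hol (fun y => f y ^ k) x := by
  filter_upwards [hf] with y h1 using h1.pow k

lemma Hol.div {f g : E → ℂ} {x : E} (hf : Hol f x) (hg : Hol g x) (h0 : g x ≠ 0) :
    Hol (fun y => f y / g y) x := by
  filter_upwards [hf, hg, hg.cont.eventually_ne h0] with y h1 h2 h3
  simp only [div_eq_mul_inv]
  exact h1.mul (h2.inv h3)

lemma Hol.sum {ι : Type*} {s : Finset ι} {f : ι → E → F} {x : E} (hf : ∀ i ∈ s, Hol (f i) x) :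
    Hol (fun y => ∑ i ∈ s, f i y) x := by
  have : ∀ᶠ y in 𝓝 x, ∀ i ∈ s, DifferentiableAt ℂ (f i) y :=
    (eventually_all_finset s).2 fun i hi => hf i hi
  filter_upwards [this] with y hy
  exact DifferentiableAt.fun_sum hy

lemma Hol.comp {g : F → G} {f : E → F} {x : E} (hg : Hol g (f x)) (hf : Hol f x) :
    Hol (fun y => g (f y)) x := by
  filter_upwards [hf, hf.cont.eventually hg] with y h1 h2
  exact DifferentiableAt.comp y h2 h1

lemma Hol.prodMk {f : E → F} {g : E → G} {x : E} (hf : Hol f x) (hg : Hol g x) :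
    Hol (fun y => (f y, g y)) x := by
  filter_upwards [hf, hg] with y h1 h2 using h1.prodMk h2

lemma hol_iff_analyticAt [CompleteSpace F] {f : ℂ → F} {x : ℂ} : Hol f x ↔ AnalyticAt ℂ f x :=
  Complex.analyticAt_iff_eventually_differentiableAt.symm

/-- A jointly holomorphic integrand has a holomorphic contour integral. -/
lemma hol_circleIntegral [FiniteDimensional ℂ E] {H : E × ℂ → ℂ} {x₀ : E} {c : ℂ} {r : ℝ}
    (hr : 0 ≤ r) (hH : ∀ s ∈ sphere c r, Hol H (x₀, s)) :
    Hol (fun x => ∮ s in C(c, r), H (x, s)) x₀ := by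
  have : ProperSpace E := FiniteDimensional.proper ℂ E
  borelize E
  have hopen : IsOpen {p : E × ℂ | Hol H p} := by
    rw [isOpen_iff_mem_nhds]; intro p hp; exact hp.ev
  obtain ⟨u, v, hu, hv, hxu, hsv, huv⟩ := generalized_tube_lemma (s := {x₀}) (t := sphere c r)
    isCompact_singleton (isCompact_sphere c r) hopen (by
      rintro ⟨a, b⟩ ⟨ha, hb⟩
      obtain rfl : a = x₀ := ha
      exact hH b hb)
  obtain ⟨R, hR, hRu⟩ := Metric.isOpen_iff.1 hu x₀ (hxu rfl)
  set ρ := R / 3 with hρ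
  have hρ0 : 0 < ρ := by positivity
  have hK : ∀ x ∈ closedBall x₀ (2 * ρ), ∀ s ∈ sphere c r, DifferentiableAt ℂ H (x, s) := by
    intro x hx s hs
    refine (huv (show (x, s) ∈ u ×ˢ v from ⟨hRu ?_, hsv hs⟩) : Hol H (x, s)).diff
    rw [mem_ball]; rw [mem_closedBall] at hx; linarith
  obtain ⟨M, hM⟩ := ((isCompact_closedBall x₀ (2 * ρ)).prod
    (isCompact_sphere c r)).exists_bound_of_continuousOn
    (f := H) (fun p hp => (hK p.1 hp.1 p.2 hp.2).continuousAt.continuousWithinAt)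
  have hM' : ∀ x ∈ closedBall x₀ (2 * ρ), ∀ s ∈ sphere c r, ‖H (x, s)‖ ≤ M :=
    fun x hx s hs => hM (x, s) ⟨hx, hs⟩
  have hcm : ∀ t, circleMap c r t ∈ sphere c r := circleMap_mem_sphere c hr
  have hinl : ∀ (x : E) (s : ℂ), HasFDerivAt (fun y : E => (y, s))
      (ContinuousLinearMap.inl ℂ E ℂ) x := fun x s => hasFDerivAt_prodMk_left x s
  have hdiff : ∀ x ∈ closedBall x₀ (2 * ρ), ∀ s ∈ sphere c r,
      HasFDerivAt (fun y => H (y, s))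
        ((fderiv ℂ H (x, s)).comp (ContinuousLinearMap.inl ℂ E ℂ)) x := by
    intro x hx s hs
    exact (hK x hx s hs).hasFDerivAt.comp x (hinl x s)
  have hsub : ∀ x ∈ ball x₀ ρ, closedBall x ρ ⊆ closedBall x₀ (2 * ρ) := by
    intro x hx; apply closedBall_subset_closedBall'; rw [mem_ball] at hx; linarith
  have hM0 : 0 ≤ M := (norm_nonneg _).trans
    (hM' x₀ (mem_closedBall_self (by positivity)) _ (hcm 0))
  have hbd : ∀ x ∈ ball x₀ ρ, ∀ s ∈ sphere c r,
      ‖(fderiv ℂ H (x, s)).comp (ContinuousLinearMap.inl ℂ E ℂ)‖ ≤ (2 * M + 1) / ρ := by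
    intro x hx s hs
    rw [← (hdiff x (hsub x hx (mem_closedBall_self hρ0.le)) s hs).fderiv]
    refine Complex.norm_fderiv_le_div_of_mapsTo_ball (f := fun y => H (y, s)) ?_ ?_ hρ0
    · intro y hy
      exact (hdiff y (hsub x hx (ball_subset_closedBall hy)) s
        hs).differentiableAt.differentiableWithinAt
    · intro y hy
      have h1 := hM' y (hsub x hx (ball_subset_closedBall hy)) s hs
      have h2 := hM' x (hsub x hx (mem_closedBall_self hρ0.le)) s hs
      rw [mem_closedBall, dist_eq_norm]
      have := norm_sub_le (H (y, s)) (H (x, s))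
      linarith
  have hcont : ∀ x ∈ closedBall x₀ (2 * ρ), Continuous fun t : ℝ => H (x, circleMap c r t) := by
    intro x hx
    rw [continuous_iff_continuousAt]
    intro t
    exact ContinuousAt.comp (f := fun t : ℝ => (x, circleMap c r t)) (g := H)
      (hK x hx _ (hcm t)).continuousAt (by fun_prop)
  filter_upwards [ball_mem_nhds x₀ hρ0] with x₁ hx₁
  have hball : ball x₀ ρ ∈ 𝓝 x₁ := isOpen_ball.mem_nhds hx₁
  have hb2 : ∀ x ∈ ball x₀ ρ, x ∈ closedBall x₀ (2 * ρ) := fun x hx =>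
    hsub x hx (mem_closedBall_self hρ0.le)
  have hcd : Continuous fun t : ℝ => deriv (circleMap c r) t := by
    simp only [deriv_circleMap]; fun_prop
  have key := intervalIntegral.hasFDerivAt_integral_of_dominated_of_fderiv_le (𝕜 := ℂ)
    (μ := volume) (a := 0) (b := 2 * Real.pi)
    (F := fun x t => deriv (circleMap c r) t • H (x, circleMap c r t))
    (F' := fun x t => deriv (circleMap c r) t •
      (fderiv ℂ H (x, circleMap c r t)).comp (ContinuousLinearMap.inl ℂ E ℂ))
    (bound := fun t => r * ((2 * M + 1) / ρ)) (x₀ := x₁) hball ?_ ?_ ?_ ?_ ?_ ?_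
  · exact key.differentiableAt
  · filter_upwards [hball] with x hx
    exact (hcd.smul (hcont x (hb2 x hx))).aestronglyMeasurable
  · exact (hcd.smul (hcont x₁ (hb2 _ hx₁))).intervalIntegrable _ _
  · refine (hcd.aestronglyMeasurable).smul ?_
    have h1 : Measurable fun t : ℝ => fderiv ℂ H (x₁, circleMap c r t) := by
      refine (measurable_fderiv ℂ H).comp ?_
      exact (Continuous.prodMk continuous_const (continuous_circleMap c r)).measurable
    have h2 : Continuous fun L : E × ℂ →L[ℂ] ℂ => L.comp (ContinuousLinearMap.inl ℂ E ℂ) := by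
      fun_prop
    exact (h2.comp_stronglyMeasurable h1.stronglyMeasurable).aestronglyMeasurable
  · refine Eventually.of_forall fun t _ x hx => ?_
    rw [norm_smul]
    have : ‖deriv (circleMap c r) t‖ = r := by
      simp [deriv_circleMap, abs_of_nonneg hr]
    rw [this]
    exact mul_le_mul_of_nonneg_left (hbd x hx _ (hcm t)) hr
  · exact intervalIntegrable_const
  · refine Eventually.of_forall fun t _ x hx => ?_
    exact (hdiff x (hb2 x hx) _ (hcm t)).fun_const_smul _

/-- Directional derivatives of holomorphic germs are holomorphic germs. -/
lemma Hol.fderiv_apply [FiniteDimensional ℂ E] {f : E → ℂ} {x₀ : E} (hf : Hol f x₀) (v : E) :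
    Hol (fun x => fderiv ℂ f x v) x₀ := by
  obtain ⟨R, hR, hRf⟩ := Metric.eventually_nhds_iff_ball.1 hf.ev
  obtain ⟨δ, hδ, hδv⟩ : ∃ δ > 0, δ * ‖v‖ < R / 2 := by
    refine ⟨R / (2 * (‖v‖ + 1) * 2), by positivity, ?_⟩
    rw [div_mul_eq_mul_div, div_lt_div_iff₀ (by positivity) (by positivity)]
    nlinarith [norm_nonneg v]
  have hmem : ∀ x ∈ ball x₀ (R / 2), ∀ s ∈ closedBall (0 : ℂ) δ, x + s • v ∈ ball x₀ R := by
    intro x hx s hs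
    rw [mem_ball, dist_eq_norm] at *
    rw [mem_closedBall, dist_zero_right] at hs
    calc ‖x + s • v - x₀‖ = ‖(x - x₀) + s • v‖ := by congr 1; abel
      _ ≤ ‖x - x₀‖ + ‖s‖ * ‖v‖ := (norm_add_le _ _).trans (by rw [norm_smul])
      _ < R := by nlinarith [norm_nonneg v, mul_le_mul_of_nonneg_right hs (norm_nonneg v)]
  have h1 : Hol (fun x => (2 * Real.pi * Complex.I : ℂ)⁻¹ • ∮ s in C(0, δ),
      ((s - 0) ^ 2)⁻¹ • f (x + s • v)) x₀ := by
    have := hol_circleIntegral (H := fun p : E × ℂ => ((p.2 - 0) ^ 2)⁻¹ • f (p.1 + p.2 • v))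
      (x₀ := x₀) (c := 0) hδ.le (by
        intro s hs
        have hs0 : s ≠ 0 := by
          rintro rfl; simp at hs; linarith
        have h2 : Hol (fun p : E × ℂ => f (p.1 + p.2 • v)) (x₀, s) := by
          refine Hol.comp (g := f) (f := fun p : E × ℂ => p.1 + p.2 • v) ?_
            (Hol.of_diff (by fun_prop) _)
          exact hRf _ (hmem x₀ (mem_ball_self (by positivity)) s (sphere_subset_closedBall hs))
        have h3 : Hol (fun p : E × ℂ => 1 / (p.2 - 0) ^ 2) (x₀, s) :=
          Hol.div (Hol.const _ _) (Hol.of_diff (by fun_prop) _) (by simpa using hs0)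
        exact (h3.mul h2).congr (Eventually.of_forall fun p => by simp))
    exact (Hol.const (E := E) ((2 * Real.pi * Complex.I : ℂ)⁻¹) x₀).mul this
  refine h1.congr ?_
  filter_upwards [ball_mem_nhds x₀ (half_pos hR)] with x hx
  have hU : IsOpen ((fun s : ℂ => x + s • v) ⁻¹' ball x₀ R) :=
    isOpen_ball.preimage (by fun_prop)
  have hd : ∀ s : ℂ, HasDerivAt (fun s : ℂ => x + s • v) v s := fun s => by
    simpa using ((hasDerivAt_id s).smul_const v).const_add x
  have := Complex.two_pi_I_inv_smul_circleIntegral_sub_sq_inv_smul_of_differentiable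
    (c := 0) (w₀ := 0) (R := δ) (f := fun s => f (x + s • v)) hU (fun s hs => hmem x hx s hs)
    (fun s hs => ((hRf _ hs).diff.comp s (hd s).differentiableAt).differentiableWithinAt)
    (mem_ball_self hδ)
  rw [this]
  have hfx : DifferentiableAt ℂ f (x + (0 : ℂ) • v) :=
    (hRf _ (hmem x hx 0 (mem_closedBall_self hδ.le))).diff
  have := hfx.hasFDerivAt.comp_hasDerivAt (0 : ℂ) (hd 0)
  simp only [zero_smul, add_zero] at this
  exact this.deriv

end Basic

end Germs

/-! ### Multisets with holomorphic symmetric functions -/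

section Symmetric

/-- A family of finite multisets of complex numbers whose power sums are holomorphic at `x₀`;
equivalently, the roots of a monic polynomial with holomorphic coefficients. -/
def SymHol {E : Type*} [NormedAddCommGroup E] [NormedSpace ℂ E] (s : E → Multiset ℂ)
    (x₀ : E) : Prop :=
  ∀ k : ℕ, Hol (fun x => ((s x).map fun a => a ^ k).sum) x₀

/-- Newton's identities for multisets, expressing elementary symmetric functions by power sums. -/
lemma newton_esymm (s : Multiset ℂ) (k : ℕ) :
    (k : ℂ) * s.esymm k = (-1) ^ (k + 1) *
      ∑ a ∈ Finset.HasAntidiagonal.antidiagonal k with a.1 < k,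
        (-1) ^ a.1 * s.esymm a.1 * (s.map fun b => b ^ a.2).sum := by
  obtain ⟨l, hl⟩ := Quot.exists_rep s
  obtain rfl : (l : Multiset ℂ) = s := hl
  have hs : (Finset.univ.val.map l.get : Multiset ℂ) = (l : Multiset ℂ) := by
    change ((List.finRange l.length).map l.get : Multiset ℂ) = (l : Multiset ℂ)
    simp
  have h := congrArg (MvPolynomial.aeval l.get)
    (MvPolynomial.mul_esymm_eq_sum (Fin l.length) ℂ k)
  simp only [map_mul, map_sum, map_pow, map_neg, map_one, map_natCast,
    MvPolynomial.aeval_esymm_eq_multiset_esymm, MvPolynomial.psum, MvPolynomial.aeval_X, hs] at h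
  rw [h]
  congr 1
  refine Finset.sum_congr rfl fun a _ => ?_
  congr 1
  rw [← hs, Multiset.map_map]
  rfl

/-- Newton's identities for multisets, expressing power sums by elementary symmetric functions. -/
lemma newton_psum (s : Multiset ℂ) (k : ℕ) (hk : 0 < k) :
    (s.map fun b => b ^ k).sum = (-1) ^ (k + 1) * k * s.esymm k -
      ∑ a ∈ Finset.HasAntidiagonal.antidiagonal k with a.1 ∈ Set.Ioo 0 k,
        (-1) ^ a.1 * s.esymm a.1 * (s.map fun b => b ^ a.2).sum := by
  obtain ⟨l, hl⟩ := Quot.exists_rep s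
  obtain rfl : (l : Multiset ℂ) = s := hl
  have hs : (Finset.univ.val.map l.get : Multiset ℂ) = (l : Multiset ℂ) := by
    change ((List.finRange l.length).map l.get : Multiset ℂ) = (l : Multiset ℂ)
    simp
  have hp : ∀ j : ℕ, (∑ i : Fin l.length, l.get i ^ j) =
      ((l : Multiset ℂ).map fun b => b ^ j).sum := by
    intro j
    rw [← hs, Multiset.map_map]
    rfl
  have h := congrArg (MvPolynomial.aeval l.get)
    (MvPolynomial.psum_eq_mul_esymm_sub_sum (Fin l.length) ℂ k hk)
  simp only [map_mul, map_sum, map_pow, map_neg, map_one, map_natCast, map_sub,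
    MvPolynomial.aeval_esymm_eq_multiset_esymm, MvPolynomial.psum, MvPolynomial.aeval_X, hs,
    hp] at h
  exact h

section Sym
variable {E : Type*} [NormedAddCommGroup E] [NormedSpace ℂ E]

lemma SymHol.esymm {s : E → Multiset ℂ} {x₀ : E} (hs : SymHol s x₀) (k : ℕ) :
    Hol (fun x => (s x).esymm k) x₀ := by
  induction k using Nat.strong_induction_on with
  | _ k ih =>
    rcases Nat.eq_zero_or_pos k with rfl | hk
    · exact (Hol.const 1 x₀).congr (Eventually.of_forall fun x => by simp [Multiset.esymm])
    have hk0 : (k : ℂ) ≠ 0 := by exact_mod_cast hk.ne'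
    have : Hol (fun x => (k : ℂ)⁻¹ * ((-1) ^ (k + 1) *
        ∑ a ∈ Finset.HasAntidiagonal.antidiagonal k with a.1 < k,
        (-1) ^ a.1 * (s x).esymm a.1 * ((s x).map fun b => b ^ a.2).sum)) x₀ := by
      refine (Hol.const _ _).mul ((Hol.const _ _).mul (Hol.sum fun a ha => ?_))
      exact ((Hol.const _ _).mul (ih _ (Finset.mem_filter.1 ha).2)).mul (hs _)
    refine this.congr (Eventually.of_forall fun x => ?_)
    simp only
    rw [← newton_esymm, inv_mul_cancel_left₀ hk0]

lemma SymHol.of_esymm {s : E → Multiset ℂ} {x₀ : E} {d : ℕ}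
    (hc : ∀ᶠ x in 𝓝 x₀, Multiset.card (s x) = d)
    (hs : ∀ k, 1 ≤ k → k ≤ d → Hol (fun x => (s x).esymm k) x₀) : SymHol s x₀ := by
  have hs' : ∀ k, 1 ≤ k → Hol (fun x => (s x).esymm k) x₀ := by
    intro k hk
    rcases le_or_gt k d with h | h
    · exact hs k hk h
    · refine (Hol.const 0 x₀).congr ?_
      filter_upwards [hc] with x hx
      rw [Multiset.esymm, Multiset.powersetCard_eq_empty _ (by omega)]
      simp
  intro k
  induction k using Nat.strong_induction_on with
  | _ k ih =>
    rcases Nat.eq_zero_or_pos k with rfl | hk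
    · refine (Hol.const (d : ℂ) x₀).congr ?_
      filter_upwards [hc] with x hx
      simp [hx]
    have : Hol (fun x => (-1) ^ (k + 1) * k * (s x).esymm k -
      ∑ a ∈ Finset.HasAntidiagonal.antidiagonal k with a.1 ∈ Set.Ioo 0 k,
        (-1) ^ a.1 * (s x).esymm a.1 * ((s x).map fun b => b ^ a.2).sum) x₀ := by
      refine ((Hol.const _ _).mul (hs' k hk)).sub (Hol.sum fun a ha => ?_)
      rw [Finset.mem_filter, Finset.HasAntidiagonal.mem_antidiagonal] at ha
      obtain ⟨h1, h2, h3⟩ := ha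
      exact ((Hol.const _ _).mul (hs' _ h2)).mul (ih _ (by omega))
    refine this.congr (Eventually.of_forall fun x => ?_)
    exact (newton_psum _ _ hk).symm

/-- A continuous function with natural-number values is locally constant. -/
lemma eventually_eq_of_nat {X : Type*} [TopologicalSpace X] {N : X → ℕ} {x₀ : X}
    (h : ContinuousAt (fun x => (N x : ℂ)) x₀) : ∀ᶠ x in 𝓝 x₀, N x = N x₀ := by
  filter_upwards [Metric.continuousAt_iff'.1 h (1 / 2) (by norm_num)] with x hx
  by_contra hne
  rw [dist_eq_norm] at hx
  have h1 : ‖((N x : ℂ) - N x₀)‖ = |((N x : ℤ) - (N x₀ : ℤ) : ℤ)| := by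
    have := Complex.norm_intCast ((N x : ℤ) - (N x₀ : ℤ))
    push_cast at this ⊢
    exact this
  have h2 : (1 : ℤ) ≤ |((N x : ℤ) - (N x₀ : ℤ) : ℤ)| := by
    apply Int.one_le_abs; intro h; apply hne; omega
  have h3 : (1 : ℝ) ≤ |((N x : ℤ) - (N x₀ : ℤ) : ℤ)| := by exact_mod_cast h2
  rw [h1] at hx
  linarith

lemma SymHol.card {s : E → Multiset ℂ} {x₀ : E} (hs : SymHol s x₀) :
    ∀ᶠ x in 𝓝 x₀, Multiset.card (s x) = Multiset.card (s x₀) := by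
  apply eventually_eq_of_nat
  have := (hs 0).cont
  simpa using this

lemma SymHol.comp {F : Type*} [NormedAddCommGroup F] [NormedSpace ℂ F] {s : E → Multiset ℂ}
    {g : F → E} {y : F} (hs : SymHol s (g y)) (hg : Hol g y) : SymHol (fun y => s (g y)) y :=
  fun k => Hol.comp (g := fun x => ((s x).map fun a => a ^ k).sum) (f := g) (hs k) hg

lemma SymHol.congr {s t : E → Multiset ℂ} {x₀ : E} (hs : SymHol s x₀) (h : s =ᶠ[𝓝 x₀] t) :
    SymHol t x₀ := fun k => (hs k).congr (h.mono fun x hx => by simp only [hx])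

/-- The monic polynomial with root multiset `s`. -/
noncomputable def rootPoly (s : Multiset ℂ) : ℂ[X] := (s.map fun a => X - C a).prod

lemma rootPoly_eval (s : Multiset ℂ) (z : ℂ) :
    (rootPoly s).eval z = (s.map fun a => z - a).prod := by
  rw [rootPoly, eval_multiset_prod, Multiset.map_map]
  simp

lemma rootPoly_roots (s : Multiset ℂ) : (rootPoly s).roots = s :=
  roots_multiset_prod_X_sub_C s

lemma rootPoly_eval_ne_zero {s : Multiset ℂ} {z : ℂ} :
    (rootPoly s).eval z ≠ 0 ↔ z ∉ s := by
  rw [rootPoly_eval, Ne, Multiset.prod_eq_zero_iff, Multiset.mem_map]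
  constructor
  · intro h hz; exact h ⟨z, hz, sub_self z⟩
  · rintro h ⟨a, ha, h0⟩; rw [sub_eq_zero.1 h0] at h; exact h ha

lemma rootPoly_eq_sum (s : Multiset ℂ) {d : ℕ} (hd : Multiset.card s = d) :
    rootPoly s = ∑ j ∈ Finset.range (d + 1), C ((-1) ^ j * s.esymm j) * X ^ (d - j) := by
  rw [rootPoly, Multiset.prod_X_sub_X_eq_sum_esymm, hd]
  refine Finset.sum_congr rfl fun j _ => ?_
  simp [mul_assoc]

lemma SymHol.rootPoly_eval {s : E → Multiset ℂ} {x₀ : E} (hs : SymHol s x₀) (z : ℂ) :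
    Hol (fun p : E × ℂ => (rootPoly (s p.1)).eval p.2) (x₀, z) := by
  have : Hol (fun p : E × ℂ => ∑ j ∈ Finset.range (Multiset.card (s x₀) + 1),
      ((-1) ^ j * (s p.1).esymm j) * p.2 ^ (Multiset.card (s x₀) - j)) (x₀, z) := by
    refine Hol.sum fun j _ => ((Hol.const _ _).mul ?_).mul (Hol.of_diff (by fun_prop) _)
    exact Hol.comp (g := fun x => (s x).esymm j) (f := Prod.fst) (hs.esymm j)
      (Hol.of_diff (by fun_prop) _)
  refine this.congr ?_
  filter_upwards [(continuous_fst.tendsto (x₀, z)).eventually hs.card] with p hp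
  rw [rootPoly_eq_sum _ hp, eval_finsetSum]
  simp

lemma SymHol.rootPoly_deriv {s : E → Multiset ℂ} {x₀ : E} (hs : SymHol s x₀) (z : ℂ) :
    Hol (fun p : E × ℂ => (rootPoly (s p.1)).derivative.eval p.2) (x₀, z) := by
  have : Hol (fun p : E × ℂ => ∑ j ∈ Finset.range (Multiset.card (s x₀) + 1),
      ((-1) ^ j * (s p.1).esymm j) * (((Multiset.card (s x₀) - j : ℕ) : ℂ) *
        p.2 ^ (Multiset.card (s x₀) - j - 1))) (x₀, z) := by
    refine Hol.sum fun j _ => ((Hol.const _ _).mul ?_).mul (Hol.of_diff (by fun_prop) _)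
    exact Hol.comp (g := fun x => (s x).esymm j) (f := Prod.fst) (hs.esymm j)
      (Hol.of_diff (by fun_prop) _)
  refine this.congr ?_
  filter_upwards [(continuous_fst.tendsto (x₀, z)).eventually hs.card] with p hp
  rw [rootPoly_eq_sum _ hp, derivative_sum, eval_finsetSum]
  refine Finset.sum_congr rfl fun j _ => ?_
  rw [derivative_C_mul, derivative_X_pow]
  simp

open scoped Classical in
/-- The residue computation behind the holomorphy of symmetric functions of a cluster of roots. -/
lemma integral_cluster {g : ℂ → ℂ} {c : ℂ} {r : ℝ} (hr : 0 < r)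
    (hg : ∀ z ∈ closedBall c r, DifferentiableAt ℂ g z) (s : Multiset ℂ)
    (hs : ∀ a ∈ s, a ∉ sphere c r) :
    (∮ z in C(c, r), g z * (s.map fun a => 1 / (z - a)).sum) =
      (2 * Real.pi * Complex.I) * ((s.filter fun a => a ∈ ball c r).map g).sum := by
  have hgc : ContinuousOn g (closedBall c r) := fun z hz =>
    (hg z hz).continuousAt.continuousWithinAt
  have hcont : ∀ t : Multiset ℂ, (∀ a ∈ t, a ∉ sphere c r) →
      ContinuousOn (fun z => g z * (t.map fun a => 1 / (z - a)).sum) (sphere c r) := by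
    intro t ht
    refine (hgc.mono sphere_subset_closedBall).mul ?_
    refine continuousOn_multiset_sum t fun a ha => ?_
    refine continuousOn_const.div (by fun_prop) fun z hz h0 => ?_
    rw [sub_eq_zero.1 h0] at hz; exact ht a ha hz
  induction s using Multiset.induction_on with
  | empty => simp [circleIntegral]
  | cons a s ih =>
    have ha := hs a (Multiset.mem_cons_self a s)
    have hs' : ∀ a ∈ s, a ∉ sphere c r := fun b hb => hs b (Multiset.mem_cons_of_mem hb)
    have e : ∀ z, g z * ((a ::ₘ s).map fun a => 1 / (z - a)).sum =
        g z * (({a} : Multiset ℂ).map fun a => 1 / (z - a)).sum +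
          g z * (s.map fun a => 1 / (z - a)).sum := by
      intro z; simp; ring
    simp only [e]
    rw [circleIntegral.integral_add
      ((hcont {a} (by simpa using ha)).circleIntegrable hr.le)
      ((hcont s hs').circleIntegrable hr.le), ih hs', Multiset.filter_cons, Multiset.map_add,
      Multiset.sum_add, mul_add]
    congr 1
    have e2 : ∀ z, g z * (({a} : Multiset ℂ).map fun a => 1 / (z - a)).sum =
        (z - a)⁻¹ • g z := by
      intro z; simp; ring
    simp only [e2]
    by_cases hab : a ∈ ball c r
    · rw [if_pos hab, Complex.circleIntegral_sub_inv_smul_of_differentiable_on_off_countable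
        (s := ∅) countable_empty hab hgc (fun z hz => hg z (ball_subset_closedBall hz.1))]
      simp
    · rw [if_neg hab]
      have hac : a ∉ closedBall c r := by
        rw [← ball_union_sphere]; rintro (h | h); exacts [hab h, ha h]
      have hne : ∀ z ∈ closedBall c r, z - a ≠ 0 := fun z hz h0 => by
        rw [sub_eq_zero.1 h0] at hz; exact hac hz
      simp only [Multiset.map_zero, Multiset.sum_zero, mul_zero]
      refine Complex.circleIntegral_eq_zero_of_differentiable_on_off_countable (s := ∅) hr.le
        countable_empty ?_ ?_
      · exact ContinuousOn.smul (ContinuousOn.inv₀ (by fun_prop) hne) hgc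
      · intro z hz
        have hz' := ball_subset_closedBall hz.1
        have h1 : DifferentiableAt ℂ (fun z : ℂ => z - a) z := by fun_prop
        exact (h1.inv (hne z hz')).smul (hg z hz')

open scoped Classical in
/-- Summing a holomorphic function over the cluster of roots inside a disc whose boundary carries
no root gives a holomorphic function of the parameter. -/
lemma SymHol.cluster [FiniteDimensional ℂ E] {s : E → Multiset ℂ} {x₀ : E} (hs : SymHol s x₀)
    {c : ℂ} {r : ℝ} (hr : 0 < r) (h0 : ∀ a ∈ s x₀, a ∉ sphere c r) {G : E × ℂ → ℂ}
    (hG : ∀ z ∈ closedBall c r, Hol G (x₀, z)) :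
    Hol (fun x => (((s x).filter fun a => a ∈ ball c r).map fun a => G (x, a)).sum) x₀ := by
  have hne : ∀ z ∈ sphere c r, (rootPoly (s x₀)).eval z ≠ 0 := fun z hz =>
    rootPoly_eval_ne_zero.2 fun hm => h0 z hm hz
  have h1 : Hol (fun x => ∮ z in C(c, r), G (x, z) *
      ((rootPoly (s x)).derivative.eval z / (rootPoly (s x)).eval z)) x₀ :=
    hol_circleIntegral (H := fun p => G p * ((rootPoly (s p.1)).derivative.eval p.2 /
      (rootPoly (s p.1)).eval p.2)) hr.le fun z hz =>
      (hG z (sphere_subset_closedBall hz)).mul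
        ((hs.rootPoly_deriv z).div (hs.rootPoly_eval z) (hne z hz))
  have hev : ∀ᶠ x in 𝓝 x₀, ∀ z ∈ sphere c r, (rootPoly (s x)).eval z ≠ 0 := by
    apply (isCompact_sphere c r).eventually_forall_of_forall_eventually
    intro z hz
    exact (hs.rootPoly_eval z).cont.eventually_ne (hne z hz)
  have hevG : ∀ᶠ x in 𝓝 x₀, ∀ z ∈ closedBall c r, DifferentiableAt ℂ G (x, z) := by
    apply (isCompact_closedBall c r).eventually_forall_of_forall_eventually
    intro z hz
    exact hG z hz
  have hpi : (2 * Real.pi * Complex.I : ℂ) ≠ 0 := by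
    simp [Real.pi_ne_zero]
  refine ((Hol.const (2 * Real.pi * Complex.I : ℂ)⁻¹ x₀).mul h1).congr ?_
  filter_upwards [hev, hevG] with x hx hGx
  have h2 : (∮ z in C(c, r), G (x, z) *
      ((rootPoly (s x)).derivative.eval z / (rootPoly (s x)).eval z)) =
      ∮ z in C(c, r), G (x, z) * ((s x).map fun a => 1 / (z - a)).sum := by
    refine circleIntegral.integral_congr hr.le fun z hz => ?_
    rw [(IsAlgClosed.splits _).eval_derivative_div_eval_of_ne_zero (hx z hz), rootPoly_roots]
  rw [h2, integral_cluster hr (g := fun z => G (x, z)) ?_ (s x) ?_, inv_mul_cancel_left₀ hpi]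
  · intro z hz
    exact (hGx z hz).comp z (by fun_prop : DifferentiableAt ℂ (fun z : ℂ => (x, z)) z)
  · intro a ha has
    exact rootPoly_eval_ne_zero.1 (hx a has) ha

open scoped Classical in
lemma SymHol.cluster_symHol [FiniteDimensional ℂ E] {s : E → Multiset ℂ} {x₀ : E}
    (hs : SymHol s x₀) {c : ℂ} {r : ℝ} (hr : 0 < r) (h0 : ∀ a ∈ s x₀, a ∉ sphere c r) :
    SymHol (fun x => (s x).filter fun a => a ∈ ball c r) x₀ := fun k =>
  hs.cluster hr h0 (G := fun p => p.2 ^ k) fun z _ => Hol.of_diff (by fun_prop) _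

end Sym

end Symmetric

/-! ### Zeros of a holomorphic family -/

section Zeros

lemma finite_zeros {w : ℂ → ℂ} {r : ℝ} (hr : 0 < r)
    (hw : ∀ z ∈ closedBall (0 : ℂ) r, AnalyticAt ℂ w z)
    (hs : ∀ z ∈ sphere (0 : ℂ) r, w z ≠ 0) : {z ∈ closedBall (0 : ℂ) r | w z = 0}.Finite := by
  by_contra hinf
  obtain ⟨z₀, hz₀, hacc⟩ := Set.Infinite.exists_accPt_of_subset_isCompact hinf
    (isCompact_closedBall (0 : ℂ) r) (fun z hz => hz.1)
  have hfr : ∃ᶠ z in 𝓝[≠] z₀, w z = 0 := by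
    rw [accPt_iff_frequently_nhdsNE] at hacc
    exact hacc.mono fun z hz => hz.2
  have h0 := AnalyticOnNhd.eqOn_zero_of_preconnected_of_frequently_eq_zero
    (fun z hz => hw z hz) (convex_closedBall (0 : ℂ) r).isPreconnected hz₀ hfr
  have hm : (r : ℂ) ∈ sphere (0 : ℂ) r := by simp [abs_of_pos hr]
  exact hs _ hm (h0 (sphere_subset_closedBall hm))

/-- Dividing out, one after the other, the finitely many zeros in a closed disc, with their
multiplicities. -/
lemma factor_zeros {r : ℝ} (hr : 0 < r) (N : ℕ) : ∀ w : ℂ → ℂ,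
    (∀ z ∈ closedBall (0 : ℂ) r, AnalyticAt ℂ w z) → {z ∈ closedBall (0 : ℂ) r | w z = 0}.Finite →
    {z ∈ closedBall (0 : ℂ) r | w z = 0}.ncard = N →
    ∃ (s : Multiset ℂ) (g : ℂ → ℂ), (∀ z ∈ closedBall (0 : ℂ) r, AnalyticAt ℂ g z ∧ g z ≠ 0) ∧
      (∀ a ∈ s, a ∈ closedBall (0 : ℂ) r) ∧ ∀ z, w z = (rootPoly s).eval z * g z := by
  induction N with
  | zero =>
    intro w hw hfin hN
    rw [Set.ncard_eq_zero hfin] at hN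
    refine ⟨0, w, fun z hz => ⟨hw z hz, fun h => ?_⟩, by simp, by simp [rootPoly]⟩
    have : z ∈ {z ∈ closedBall (0 : ℂ) r | w z = 0} := ⟨hz, h⟩
    rw [hN] at this; exact this
  | succ N ih =>
    intro w hw hfin hN
    obtain ⟨a, ha, ha0⟩ : {z ∈ closedBall (0 : ℂ) r | w z = 0}.Nonempty := by
      rw [← Set.ncard_pos hfin]; omega
    have hnz : ¬ ∀ᶠ z in 𝓝 a, w z = 0 := by
      intro hev
      -- by the identity theorem `w` would vanish on the whole disc
      have h1 : ∀ z ∈ closedBall (0 : ℂ) r, w z = 0 := by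
        have := AnalyticOnNhd.eqOn_zero_of_preconnected_of_eventuallyEq_zero
          (fun z hz => hw z hz) (convex_closedBall (0 : ℂ) r).isPreconnected ha hev
        exact this
      have : closedBall (0 : ℂ) r ⊆ {z ∈ closedBall (0 : ℂ) r | w z = 0} :=
        fun z hz => ⟨hz, h1 z hz⟩
      exact (infinite_of_mem_nhds (0 : ℂ) (closedBall_mem_nhds (0 : ℂ) hr)) (hfin.subset this)
    obtain ⟨m, g, hg, hga, hgw⟩ :=
      ((hw a ha).exists_eventuallyEq_pow_smul_nonzero_iff).2 hnz
    have hm : m ≠ 0 := by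
      rintro rfl
      have := hgw.self_of_nhds
      simp [ha0] at this
      exact hga this.symm
    set w₁ : ℂ → ℂ := Function.update (fun z => w z / (z - a) ^ m) a (g a) with hw₁
    have hw₁a : w₁ a = g a := by simp [hw₁]
    have hw₁n : ∀ z, z ≠ a → w₁ z = w z / (z - a) ^ m := fun z hz => by
      simp [hw₁, Function.update_of_ne hz]
    have hww : ∀ z, w z = (z - a) ^ m * w₁ z := by
      intro z
      by_cases hz : z = a
      · subst hz; simp [ha0, hm]
      · rw [hw₁n z hz, mul_div_cancel₀]
        exact pow_ne_zero _ (sub_ne_zero.2 hz)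
    have han : ∀ z ∈ closedBall (0 : ℂ) r, AnalyticAt ℂ w₁ z := by
      intro z hz
      by_cases hza : z = a
      · subst hza
        refine hg.congr ?_
        filter_upwards [hgw] with y hy
        by_cases hya : y = z
        · rw [hya, hw₁a]
        · rw [hw₁n y hya, hy, smul_eq_mul, mul_div_cancel_left₀]
          exact pow_ne_zero _ (sub_ne_zero.2 hya)
      · have : AnalyticAt ℂ (fun y => w y / (y - a) ^ m) z :=
          (hw z hz).div (by fun_prop) (pow_ne_zero _ (sub_ne_zero.2 hza))
        refine this.congr ?_
        filter_upwards [isOpen_ne.mem_nhds hza] with y hy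
        exact (hw₁n y hy).symm
    have hset : {z ∈ closedBall (0 : ℂ) r | w z = 0} =
        insert a {z ∈ closedBall (0 : ℂ) r | w₁ z = 0} := by
      ext z
      simp only [mem_ofPred_eq, mem_insert_iff]
      constructor
      · rintro ⟨h1, h2⟩
        by_cases hza : z = a
        · exact Or.inl hza
        · rw [hww, mul_eq_zero] at h2
          exact Or.inr ⟨h1, h2.resolve_left (pow_ne_zero _ (sub_ne_zero.2 hza))⟩
      · rintro (rfl | ⟨h1, h2⟩)
        · exact ⟨ha, ha0⟩
        · exact ⟨h1, by rw [hww, h2, mul_zero]⟩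
    have hna : a ∉ {z ∈ closedBall (0 : ℂ) r | w₁ z = 0} := fun h => hga (hw₁a ▸ h.2)
    rw [hset] at hfin
    have hfin₁ := hfin.subset (subset_insert _ _)
    rw [hset, Set.ncard_insert_of_notMem hna hfin₁] at hN
    obtain ⟨s, G, hG, hsb, hs⟩ := ih w₁ han hfin₁ (by omega)
    refine ⟨s + Multiset.replicate m a, G, hG, ?_, fun z => ?_⟩
    · intro b hb
      rcases Multiset.mem_add.1 hb with h | h
      · exact hsb b h
      · rw [Multiset.eq_of_mem_replicate h]; exact ha
    · rw [hww, hs]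
      simp only [rootPoly_eval, Multiset.map_add, Multiset.prod_add, Multiset.map_replicate,
        Multiset.prod_replicate]
      ring

open scoped Classical in
/-- The argument principle with weights: the zeros of `w` in a disc, with multiplicity, together
with the contour integrals computing their power sums. The multiplicities enter only through the
integrals. -/
lemma zeros_multiset {r : ℝ} (hr : 0 < r) (w : ℂ → ℂ)
    (hw : ∀ z ∈ closedBall (0 : ℂ) r, AnalyticAt ℂ w z)
    (hs : ∀ z ∈ sphere (0 : ℂ) r, w z ≠ 0) :
    ∃ s : Multiset ℂ, (∀ a ∈ s, a ∈ ball (0 : ℂ) r ∧ w a = 0) ∧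
      (∀ z ∈ closedBall (0 : ℂ) r, w z = 0 → z ∈ s) ∧
      ∀ k : ℕ, (∮ z in C(0, r), z ^ k * (deriv w z / w z)) =
        (2 * Real.pi * Complex.I) * (s.map fun a => a ^ k).sum := by
  obtain ⟨s, g, hg, hsb, hsw⟩ := factor_zeros hr _ w hw (finite_zeros hr hw hs) rfl
  have hzero : ∀ a ∈ s, w a = 0 := by
    intro a ha
    rw [hsw, not_ne_iff.1 (mt rootPoly_eval_ne_zero.1 (not_not.2 ha)), zero_mul]
  have hsph : ∀ a ∈ s, a ∉ sphere (0 : ℂ) r := fun a ha h => hs a h (hzero a ha)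
  have hball : ∀ a ∈ s, a ∈ ball (0 : ℂ) r := by
    intro a ha
    have := hsb a ha
    rw [← ball_union_sphere] at this
    exact this.resolve_right (hsph a ha)
  refine ⟨s, fun a ha => ⟨hball a ha, hzero a ha⟩, ?_, fun k => ?_⟩
  · intro z hz h0
    rw [hsw, mul_eq_zero] at h0
    have h0 := h0.resolve_right (hg z hz).2
    by_contra hns
    exact rootPoly_eval_ne_zero.2 hns h0
  have hg1 : ∀ z ∈ closedBall (0 : ℂ) r, DifferentiableAt ℂ (fun z => deriv g z / g z) z :=
    fun z hz => ((hg z hz).1.deriv.div (hg z hz).1 (hg z hz).2).differentiableAt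
  have h1 : (∮ z in C(0, r), z ^ k * (deriv w z / w z)) =
      ∮ z in C(0, r), (z ^ k * (s.map fun a => 1 / (z - a)).sum + z ^ k * (deriv g z / g z)) := by
    refine circleIntegral.integral_congr hr.le fun z hz => ?_
    have hz' := sphere_subset_closedBall hz
    have hp : (rootPoly s).eval z ≠ 0 := rootPoly_eval_ne_zero.2 fun h => hsph z h hz
    have hd : deriv w z = (rootPoly s).derivative.eval z * g z +
        (rootPoly s).eval z * deriv g z := by
      have : w = fun z => (rootPoly s).eval z * g z := funext hsw
      rw [this]
      exact ((rootPoly s).hasDerivAt z).mul (hg z hz').1.differentiableAt.hasDerivAt |>.deriv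
    have hsum := (IsAlgClosed.splits (rootPoly s)).eval_derivative_div_eval_of_ne_zero hp
    rw [rootPoly_roots] at hsum
    have := (hg z hz').2
    rw [hd, hsw z, ← hsum]
    field_simp
  have hc1 : ContinuousOn (fun z => z ^ k * (deriv g z / g z)) (closedBall (0 : ℂ) r) :=
    (by fun_prop : Continuous fun z : ℂ => z ^ k).continuousOn.mul fun z hz =>
      (hg1 z hz).continuousAt.continuousWithinAt
  have hc2 : ContinuousOn (fun z => z ^ k * (s.map fun a => 1 / (z - a)).sum)
      (sphere (0 : ℂ) r) := by
    refine (by fun_prop : Continuous fun z : ℂ => z ^ k).continuousOn.mul ?_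
    refine continuousOn_multiset_sum s fun a ha => ?_
    refine continuousOn_const.div (by fun_prop) fun z hz h0 => ?_
    rw [sub_eq_zero.1 h0] at hz; exact hsph a ha hz
  rw [h1, circleIntegral.integral_add (hc2.circleIntegrable hr.le)
    ((hc1.mono sphere_subset_closedBall).circleIntegrable hr.le),
    integral_cluster hr (g := fun z => z ^ k) (fun z _ => by fun_prop) s hsph,
    Complex.circleIntegral_eq_zero_of_differentiable_on_off_countable (s := ∅) hr.le
      countable_empty hc1, add_zero, Multiset.filter_eq_self.2 hball]
  intro z hz
  exact (by fun_prop : DifferentiableAt ℂ (fun z : ℂ => z ^ k) z).mul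
    (hg1 z (ball_subset_closedBall hz.1))

/-- Weierstrass preparation without the polynomial: the small zeros of `F (x, ·)` belong to a
multiset `θ x` that depends holomorphically on `x` and shrinks to `0` as `x → 0`. -/
lemma small_zeros {E : Type*} [NormedAddCommGroup E] [NormedSpace ℂ E] [FiniteDimensional ℂ E]
    {F : E × ℂ → ℂ} (hF : Hol F 0) (hF0 : ∀ᶠ z in 𝓝[≠] (0 : ℂ), F (0, z) ≠ 0) :
    ∃ θ : E → Multiset ℂ, SymHol θ 0 ∧ (∀ r > 0, ∀ᶠ x in 𝓝 (0 : E), ∀ a ∈ θ x, ‖a‖ < r) ∧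
      ∃ r > 0, ∀ᶠ x in 𝓝 (0 : E), ∀ z : ℂ, ‖z‖ < r → F (x, z) = 0 → z ∈ θ x := by
  obtain ⟨r, hr, hrF, hrn⟩ : ∃ r > 0, (∀ z ∈ closedBall (0 : ℂ) r, Hol F (0, z)) ∧
      ∀ z ∈ closedBall (0 : ℂ) r, z ≠ 0 → F (0, z) ≠ 0 := by
    have h1 : ∀ᶠ z in 𝓝 (0 : ℂ), Hol F ((0 : E), z) :=
      (by fun_prop : Continuous fun z : ℂ => ((0 : E), z)).tendsto 0 |>.eventually hF.ev
    have h2 : ∀ᶠ z in 𝓝 (0 : ℂ), z ≠ 0 → F (0, z) ≠ 0 := by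
      rw [eventually_nhdsWithin_iff] at hF0; exact hF0
    obtain ⟨ε, hε, h⟩ := Metric.nhds_basis_closedBall.eventually_iff.1 (h1.and h2)
    exact ⟨ε, hε, fun z hz => (h hz).1, fun z hz => (h hz).2⟩
  have hev1 : ∀ᶠ x in 𝓝 (0 : E), ∀ z ∈ closedBall (0 : ℂ) r, Hol F (x, z) := by
    apply (isCompact_closedBall (0 : ℂ) r).eventually_forall_of_forall_eventually
    intro z hz
    exact (hrF z hz).ev
  have hcl : ∀ ρ > 0, ∀ᶠ x in 𝓝 (0 : E), ∀ z ∈ closedBall (0 : ℂ) r \ ball 0 ρ,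
      F (x, z) ≠ 0 := by
    intro ρ hρ
    apply ((isCompact_closedBall (0 : ℂ) r).diff isOpen_ball).eventually_forall_of_forall_eventually
    rintro z ⟨hz, hz2⟩
    refine (hrF z hz).cont.eventually_ne (hrn z hz ?_)
    rintro rfl
    exact hz2 (mem_ball_self hρ)
  have hfd : ∀ x z, Hol F (x, z) →
      HasDerivAt (fun z => F (x, z)) (fderiv ℂ F (x, z) (0, 1)) z := by
    intro x z h
    have h2 : HasDerivAt (fun z : ℂ => (x, z)) ((0 : E), (1 : ℂ)) z :=
      (hasDerivAt_const z x).prodMk (hasDerivAt_id z)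
    exact h.diff.hasFDerivAt.comp_hasDerivAt z h2
  have hana : ∀ x z, Hol F (x, z) → AnalyticAt ℂ (fun z => F (x, z)) z := by
    intro x z h
    rw [← hol_iff_analyticAt]
    exact Hol.comp (g := F) (f := fun z => (x, z)) h (Hol.of_diff (by fun_prop) _)
  have hsd : ∀ z ∈ sphere (0 : ℂ) r, z ∈ closedBall (0 : ℂ) r \ ball 0 r := fun z hz =>
    ⟨sphere_subset_closedBall hz, fun h => by
      rw [mem_sphere] at hz; rw [mem_ball] at h; linarith⟩
  have hex : ∀ x : E, ∃ s : Multiset ℂ,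
      ((∀ z ∈ closedBall (0 : ℂ) r, Hol F (x, z)) →
        (∀ z ∈ closedBall (0 : ℂ) r \ ball 0 r, F (x, z) ≠ 0) →
      ((∀ a ∈ s, a ∈ ball (0 : ℂ) r ∧ F (x, a) = 0) ∧
      (∀ z ∈ closedBall (0 : ℂ) r, F (x, z) = 0 → z ∈ s) ∧
      ∀ k : ℕ, (∮ z in C(0, r), z ^ k * (fderiv ℂ F (x, z) (0, 1) / F (x, z))) =
        (2 * Real.pi * Complex.I) * (s.map fun a => a ^ k).sum)) := by
    intro x
    by_cases h : (∀ z ∈ closedBall (0 : ℂ) r, Hol F (x, z)) ∧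
        (∀ z ∈ closedBall (0 : ℂ) r \ ball 0 r, F (x, z) ≠ 0)
    · obtain ⟨s, h1, h2, h3⟩ := zeros_multiset hr (fun z => F (x, z))
        (fun z hz => hana x z (h.1 z hz)) (fun z hz => h.2 z (hsd z hz))
      refine ⟨s, fun _ _ => ⟨h1, h2, fun k => ?_⟩⟩
      rw [← h3]
      refine circleIntegral.integral_congr hr.le fun z hz => ?_
      simp only [(hfd x z (h.1 z (sphere_subset_closedBall hz))).deriv]
    · exact ⟨0, fun h1 h2 => absurd ⟨h1, h2⟩ h⟩
  choose θ hθ using hex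
  refine ⟨θ, fun k => ?_, fun ρ hρ => ?_, r, hr, ?_⟩
  · have h1 : Hol (fun x => ∮ z in C(0, r), z ^ k * (fderiv ℂ F (x, z) (0, 1) / F (x, z)))
        (0 : E) := by
      refine hol_circleIntegral
        (H := fun p : E × ℂ => p.2 ^ k * (fderiv ℂ F p (0, 1) / F p)) hr.le fun z hz => ?_
      have hz' := sphere_subset_closedBall hz
      refine (Hol.of_diff (by fun_prop) _).mul (((hrF z hz').fderiv_apply _).div (hrF z hz') ?_)
      refine hrn z hz' ?_
      rintro rfl
      simp at hz
      linarith
    have hpi : (2 * Real.pi * Complex.I : ℂ) ≠ 0 := by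
      simp [Real.pi_ne_zero]
    refine ((Hol.const (2 * Real.pi * Complex.I : ℂ)⁻¹ (0 : E)).mul h1).congr ?_
    filter_upwards [hev1, hcl r hr] with x hx1 hx2
    rw [(hθ x hx1 hx2).2.2 k, inv_mul_cancel_left₀ hpi]
  · filter_upwards [hev1, hcl r hr, hcl ρ hρ] with x hx1 hx2 hx3 a ha
    obtain ⟨h1, h2⟩ := (hθ x hx1 hx2).1 a ha
    by_contra hlt
    refine hx3 a ⟨ball_subset_closedBall h1, fun h => ?_⟩ h2
    rw [mem_ball_zero_iff] at h; exact hlt h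
  · filter_upwards [hev1, hcl r hr] with x hx1 hx2 z hz h0
    exact (hθ x hx1 hx2).2.1 z (by rw [mem_closedBall_zero_iff]; exact hz.le) h0

/-- Applying a holomorphic function to a holomorphic family of roots tending to zero. -/
lemma SymHol.map_small {E : Type*} [NormedAddCommGroup E] [NormedSpace ℂ E]
    [FiniteDimensional ℂ E] {θ : E → Multiset ℂ} (hθ : SymHol θ 0)
    (hsm : ∀ r > 0, ∀ᶠ x in 𝓝 (0 : E), ∀ a ∈ θ x, ‖a‖ < r) {G : E × ℂ → ℂ} (hG : Hol G 0) :
    SymHol (fun x => (θ x).map fun a => G (x, a)) 0 := by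
  classical
  intro k
  obtain ⟨r, hr, hrG⟩ : ∃ r > 0, ∀ z ∈ closedBall (0 : ℂ) r, Hol G ((0 : E), z) := by
    have h1 : ∀ᶠ z in 𝓝 (0 : ℂ), Hol G ((0 : E), z) :=
      (by fun_prop : Continuous fun z : ℂ => ((0 : E), z)).tendsto 0 |>.eventually hG.ev
    obtain ⟨ε, hε, h⟩ := Metric.nhds_basis_closedBall.eventually_iff.1 h1
    exact ⟨ε, hε, fun z hz => h hz⟩
  have := hθ.cluster hr (c := 0) (fun a ha hs => by
    have := (hsm r hr).self_of_nhds a ha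
    rw [mem_sphere_zero_iff_norm] at hs; linarith) (G := fun p => G p ^ k)
    fun z hz => (hrG z hz).pow k
  refine this.congr ?_
  filter_upwards [hsm r hr] with x hx
  rw [Multiset.filter_eq_self.2 fun a ha => mem_ball_zero_iff.2 (hx a ha), Multiset.map_map]
  rfl

end Zeros

/-! ### Puiseux's theorem -/

section Puiseux

lemma multiset_ext_esymm {s t : Multiset ℂ} (hc : Multiset.card s = Multiset.card t)
    (h : ∀ i, 1 ≤ i → i ≤ Multiset.card t → s.esymm i = t.esymm i) : s = t := by
  rw [← rootPoly_roots s, ← rootPoly_roots t, rootPoly_eq_sum s hc, rootPoly_eq_sum t rfl]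
  congr 1
  refine Finset.sum_congr rfl fun j hj => ?_
  rcases Nat.eq_zero_or_pos j with rfl | hj0
  · simp [Multiset.esymm]
  · rw [h j hj0 (by rw [Finset.mem_range] at hj; omega)]

/-- Every list of values is realised as the elementary symmetric functions of a multiset. -/
lemma exists_multiset_esymm (d : ℕ) (c : ℕ → ℂ) :
    ∃ s : Multiset ℂ, Multiset.card s = d ∧ ∀ i, 1 ≤ i → i ≤ d → s.esymm i = c i := by
  set p : ℂ[X] := X ^ d + ∑ j ∈ Finset.range d, C ((-1) ^ (d - j) * c (d - j)) * X ^ j with hp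
  have hdeg : (∑ j ∈ Finset.range d, C ((-1) ^ (d - j) * c (d - j)) * X ^ j : ℂ[X]).degree
      < (d : WithBot ℕ) := by
    rw [← mem_degreeLT]
    refine Submodule.sum_mem _ fun j hj => mem_degreeLT.2 ?_
    refine (degree_C_mul_X_pow_le _ _).trans_lt ?_
    exact_mod_cast Finset.mem_range.1 hj
  have hmon : p.Monic := monic_X_pow_add hdeg
  have hnd : p.natDegree = d := natDegree_eq_of_degree_eq_some (by
    rw [hp, degree_add_eq_left_of_degree_lt (by rwa [degree_X_pow]), degree_X_pow])
  have hcard : Multiset.card p.roots = p.natDegree :=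
    (IsAlgClosed.splits p).natDegree_eq_card_roots.symm
  refine ⟨p.roots, hcard.trans hnd, fun i hi hid => ?_⟩
  have h1 := coeff_eq_esymm_roots_of_card hcard (k := d - i) (by omega)
  rw [hmon.leadingCoeff, hnd, one_mul, Nat.sub_sub_self hid] at h1
  have h2 : p.coeff (d - i) = (-1) ^ i * c i := by
    rw [hp, coeff_add, coeff_X_pow, if_neg (by omega), zero_add, finsetSum_coeff,
      Finset.sum_eq_single (d - i)]
    · rw [coeff_C_mul, coeff_X_pow, if_pos rfl, mul_one, Nat.sub_sub_self hid]
    · intro j _ hj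
      rw [coeff_C_mul, coeff_X_pow, if_neg hj.symm, mul_zero]
    · intro h; exact absurd (Finset.mem_range.2 (by omega)) h
  rw [h2] at h1
  exact (mul_left_cancel₀ (pow_ne_zero i (by norm_num : (-1 : ℂ) ≠ 0)) h1).symm

lemma esymm_replicate_zero (d i : ℕ) (hi : 1 ≤ i) :
    (Multiset.replicate d (0 : ℂ)).esymm i = 0 := by
  have h := Multiset.pow_smul_esymm (0 : ℂ) i (Multiset.replicate d (0 : ℂ))
  rw [zero_pow (by omega), zero_smul] at h
  simpa using h.symm

lemma SymHol.map_sub {E : Type*} [NormedAddCommGroup E] [NormedSpace ℂ E] {s : E → Multiset ℂ}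
    {x₀ : E} (hs : SymHol s x₀) {m : E → ℂ} (hm : Hol m x₀) :
    SymHol (fun x => (s x).map fun a => a - m x) x₀ := by
  intro k
  have : Hol (fun x => ∑ j ∈ Finset.range (k + 1), ((s x).map fun a => a ^ j).sum *
      (((-1) * m x) ^ (k - j) * (k.choose j : ℂ))) x₀ :=
    Hol.sum fun j _ => (hs j).mul ((((Hol.const _ _).mul hm).pow _).mul (Hol.const _ _))
  refine this.congr (Eventually.of_forall fun x => ?_)
  simp only [Multiset.map_map, Function.comp_def, sub_eq_add_neg, ← neg_one_mul (m x)]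
  generalize s x = t
  induction t using Multiset.induction_on with
  | empty => simp
  | cons a t ih =>
    simp only [Multiset.map_cons, Multiset.sum_cons, add_mul, Finset.sum_add_distrib, ih, add_pow]
    simp only [mul_assoc]

lemma esymm_one_eq_sum (s : Multiset ℂ) : s.esymm 1 = s.sum := by
  have := newton_psum s 1 one_pos
  simp at this
  rw [this, Finset.sum_eq_zero, sub_zero]
  intro a ha
  simp at ha
  omega

/-- One Newton–Puiseux step: after the substitution `x = η ^ b` the roots of a centred family
become divisible by `η ^ q`, and the quotient family is not concentrated at one point. -/
lemma puiseux_step {d : ℕ} {t : ℂ → Multiset ℂ} (ht : SymHol t 0)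
    (hd : ∀ᶠ x in 𝓝 (0 : ℂ), Multiset.card (t x) = d)
    (h1 : ∀ᶠ x in 𝓝 (0 : ℂ), (t x).esymm 1 = 0)
    (hne : ∃ i, 1 ≤ i ∧ i ≤ d ∧ ¬ ∀ᶠ x in 𝓝 (0 : ℂ), (t x).esymm i = 0) :
    ∃ (b q : ℕ) (u : ℂ → Multiset ℂ), 1 ≤ b ∧ SymHol u 0 ∧ Multiset.card (u 0) = d ∧
      (∀ᶠ η in 𝓝[≠] (0 : ℂ), t (η ^ b) = (u η).map fun a => η ^ q * a) ∧
      ∃ a ∈ u 0, ∃ a' ∈ u 0, a ≠ a' := by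
  classical
  have hana : ∀ i, AnalyticAt ℂ (fun x => (t x).esymm i) 0 := fun i =>
    hol_iff_analyticAt.1 (ht.esymm i)
  set S : Finset ℕ := (Finset.Icc 1 d).filter
    fun i => ¬ ∀ᶠ x in 𝓝 (0 : ℂ), (t x).esymm i = 0 with hS
  have hex : ∀ i, ∃ (n : ℕ) (g : ℂ → ℂ), i ∈ S → AnalyticAt ℂ g 0 ∧ g 0 ≠ 0 ∧
      ∀ᶠ x in 𝓝 (0 : ℂ), (t x).esymm i = x ^ n * g x := by
    intro i
    by_cases hi : i ∈ S
    · obtain ⟨n, g, h1, h2, h3⟩ := ((hana i).exists_eventuallyEq_pow_smul_nonzero_iff).2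
        (Finset.mem_filter.1 hi).2
      exact ⟨n, g, fun _ => ⟨h1, h2, by simpa using h3⟩⟩
    · exact ⟨0, 0, fun h => absurd h hi⟩
  choose n g hg using hex
  have hSne : S.Nonempty := by
    obtain ⟨i, h1, h2, h3⟩ := hne
    exact ⟨i, Finset.mem_filter.2 ⟨Finset.mem_Icc.2 ⟨h1, h2⟩, h3⟩⟩
  -- `n b / b` is the smallest slope of the Newton polygon, i.e. the leading exponent of the roots
  obtain ⟨b, hbS, hmin⟩ := S.exists_min_image (fun i => (n i : ℝ) / i) hSne
  have hSpos : ∀ i ∈ S, 1 ≤ i ∧ i ≤ d := fun i hi =>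
    Finset.mem_Icc.1 (Finset.mem_filter.1 hi).1
  obtain ⟨hb1, hbd⟩ := hSpos b hbS
  have hle : ∀ i ∈ S, n b * i ≤ n i * b := by
    intro i hi
    have h := hmin i hi
    have hi0 : (0 : ℝ) < i := by exact_mod_cast (hSpos i hi).1
    have hb0 : (0 : ℝ) < b := by exact_mod_cast hb1
    rw [div_le_div_iff₀ hb0 hi0] at h
    exact_mod_cast h
  set q := n b with hq
  set Ec : ℕ → ℂ → ℂ := fun i η =>
    if i ∈ S then η ^ (n i * b - q * i) * g i (η ^ b) else 0 with hEc
  have hpow0 : (0 : ℂ) ^ b = 0 := zero_pow (by omega)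
  have hEana : ∀ i, AnalyticAt ℂ (Ec i) 0 := by
    intro i
    by_cases hi : i ∈ S
    · have : Ec i = fun η => η ^ (n i * b - q * i) * g i (η ^ b) := by
        funext η; simp [hEc, hi]
      rw [this]
      refine AnalyticAt.mul (by fun_prop) ?_
      refine AnalyticAt.comp (g := g i) (f := fun η => η ^ b) ?_ (by fun_prop)
      rw [hpow0]; exact (hg i hi).1
    · have : Ec i = fun _ => 0 := by funext η; simp [hEc, hi]
      rw [this]; exact analyticAt_const
  choose u hu using fun η => exists_multiset_esymm d fun i => Ec i η
  have hEb : Ec b 0 ≠ 0 := by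
    simp only [hEc, hbS, if_true, hq, Nat.sub_self, pow_zero, one_mul, hpow0]
    exact (hg b hbS).2.1
  have hE1 : Ec 1 0 = 0 := by
    have : (1 : ℕ) ∉ S := fun h => (Finset.mem_filter.1 h).2 h1
    simp [hEc, this]
  refine ⟨b, q, u, hb1, ?_, (hu 0).1, ?_, ?_⟩
  · refine SymHol.of_esymm (d := d) (Eventually.of_forall fun η => (hu η).1) fun k hk hkd => ?_
    refine (hol_iff_analyticAt.2 (hEana k)).congr (Eventually.of_forall fun η => ?_)
    exact ((hu η).2 k hk hkd).symm
  · have htend : Tendsto (fun η : ℂ => η ^ b) (𝓝[≠] 0) (𝓝 0) := by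
      have : Tendsto (fun η : ℂ => η ^ b) (𝓝 0) (𝓝 (0 ^ b)) := (continuous_pow b).tendsto 0
      rw [hpow0] at this
      exact this.mono_left nhdsWithin_le_nhds
    have hev : ∀ᶠ x in 𝓝 (0 : ℂ), ∀ i ∈ Finset.Icc 1 d,
        (t x).esymm i = if i ∈ S then x ^ n i * g i x else 0 := by
      refine (eventually_all_finset _).2 fun i hi => ?_
      by_cases hiS : i ∈ S
      · simpa [hiS] using (hg i hiS).2.2
      · simp only [hiS, if_false]
        by_contra hcon
        exact hiS (Finset.mem_filter.2 ⟨hi, hcon⟩)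
    filter_upwards [htend.eventually hev, htend.eventually hd] with η hη hηd
    refine multiset_ext_esymm (by rw [Multiset.card_map, (hu η).1, hηd]) fun i hi hid => ?_
    rw [Multiset.card_map, (hu η).1] at hid
    have hsc := Multiset.pow_smul_esymm (η ^ q) i (u η)
    simp only [smul_eq_mul] at hsc
    rw [← hsc, (hu η).2 i hi hid, hη i (Finset.mem_Icc.2 ⟨hi, hid⟩)]
    by_cases hiS : i ∈ S
    · simp only [hEc, hiS, if_true]
      rw [← mul_assoc, ← pow_mul, ← pow_mul, ← pow_add, mul_comm b (n i),
        Nat.add_sub_cancel' (hle i hiS)]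
    · simp [hEc, hiS]
  · -- roots all equal with sum `0` vanish, contradicting `Ec b 0 ≠ 0`
    by_contra! hall
    have hc := (hu 0).1
    obtain ⟨a, ha⟩ : ∃ a, a ∈ u 0 := Multiset.card_pos_iff_exists_mem.1 (by omega)
    have hrep : u 0 = Multiset.replicate d a :=
      Multiset.eq_replicate.2 ⟨hc, fun a' ha' => (hall a ha a' ha').symm⟩
    have hsum : (u 0).esymm 1 = 0 := by rw [(hu 0).2 1 le_rfl (by omega), hE1]
    rw [esymm_one_eq_sum, hrep, Multiset.sum_replicate, nsmul_eq_mul, mul_eq_zero] at hsum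
    have ha0 : a = 0 := hsum.resolve_left (by
      have : d ≠ 0 := by omega
      exact_mod_cast this)
    apply hEb
    rw [← (hu 0).2 b hb1 hbd, hrep, ha0, esymm_replicate_zero d b hb1]

lemma tendsto_pow_punctured {M : ℕ} (hM : 1 ≤ M) :
    Tendsto (fun η : ℂ => η ^ M) (𝓝[≠] 0) (𝓝[≠] 0) := by
  refine tendsto_nhdsWithin_iff.2 ⟨?_, ?_⟩
  · have : Tendsto (fun η : ℂ => η ^ M) (𝓝 0) (𝓝 (0 ^ M)) := (continuous_pow M).tendsto 0
    rw [zero_pow (by omega)] at this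
    exact this.mono_left nhdsWithin_le_nhds
  · filter_upwards [self_mem_nhdsWithin] with η hη using pow_ne_zero _ hη

/-- Puiseux's theorem: after a ramified base change, the roots of a one-parameter holomorphic
family become holomorphic functions of the parameter. The induction is on the number of roots,
which drops because a nonconcentrated family splits into two clusters. -/
lemma puiseux (d : ℕ) : ∀ s : ℂ → Multiset ℂ, SymHol s 0 → Multiset.card (s 0) = d →
    ∃ M ≥ 1, ∃ L : Multiset (ℂ → ℂ), (∀ ℓ ∈ L, AnalyticAt ℂ ℓ 0) ∧
      ∀ᶠ η in 𝓝[≠] (0 : ℂ), s (η ^ M) = L.map fun ℓ => ℓ η := by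
  classical
  induction d using Nat.strong_induction_on with
  | _ d ih =>
  intro s hs hcard
  have hd := hs.card
  rw [hcard] at hd
  rcases Nat.eq_zero_or_pos d with rfl | hdpos
  · refine ⟨1, le_rfl, 0, by simp, ?_⟩
    filter_upwards [nhdsWithin_le_nhds hd] with η hη
    simpa using hη
  have hd0 : (d : ℂ) ≠ 0 := by exact_mod_cast hdpos.ne'
  set m : ℂ → ℂ := fun x => (s x).sum / d with hm
  have hmH : Hol m 0 := by
    refine Hol.div ?_ (Hol.const _ _) hd0
    simpa using hs 1
  have hmA : AnalyticAt ℂ m 0 := hol_iff_analyticAt.1 hmH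
  set t : ℂ → Multiset ℂ := fun x => (s x).map fun a => a - m x with htdef
  have ht : SymHol t 0 := hs.map_sub hmH
  have htd : ∀ᶠ x in 𝓝 (0 : ℂ), Multiset.card (t x) = d := by
    filter_upwards [hd] with x hx; simp [htdef, hx]
  have hst : ∀ x, s x = (t x).map fun a => a + m x := by
    intro x; simp [htdef, Multiset.map_map]
  have ht1 : ∀ᶠ x in 𝓝 (0 : ℂ), (t x).esymm 1 = 0 := by
    filter_upwards [hd] with x hx
    rw [esymm_one_eq_sum, htdef]
    simp only [Multiset.sum_map_sub, Multiset.map_id', Multiset.map_const', Multiset.sum_replicate,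
      hx, hm, nsmul_eq_mul]
    field_simp
    ring
  by_cases hz : ∃ i, 1 ≤ i ∧ i ≤ d ∧ ¬ ∀ᶠ x in 𝓝 (0 : ℂ), (t x).esymm i = 0
  swap
  · push Not at hz
    have hev : ∀ᶠ x in 𝓝 (0 : ℂ), ∀ i ∈ Finset.Icc 1 d, (t x).esymm i = 0 :=
      (eventually_all_finset _).2 fun i hi =>
        hz i (Finset.mem_Icc.1 hi).1 (Finset.mem_Icc.1 hi).2
    refine ⟨1, le_rfl, Multiset.replicate d m, ?_, ?_⟩
    · intro ℓ hℓ; rw [Multiset.eq_of_mem_replicate hℓ]; exact hmA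
    · refine nhdsWithin_le_nhds ?_
      filter_upwards [hev, htd] with x hx hxd
      have : t x = Multiset.replicate d 0 := by
        refine multiset_ext_esymm (by simp [hxd]) fun i hi hid => ?_
        rw [Multiset.card_replicate] at hid
        rw [hx i (Finset.mem_Icc.2 ⟨hi, hid⟩), esymm_replicate_zero d i hi]
      rw [pow_one, hst, this]
      simp
  obtain ⟨b, q, u, hb, hu, hud, htu, a, ha, a', ha', haa⟩ := puiseux_step ht htd ht1 hz
  -- isolate the root `a` of `u 0`
  obtain ⟨r, hr, hra⟩ : ∃ r > 0, ∀ c ∈ u 0, c ≠ a → r < dist c a := by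
    have hfin : ((u 0).toFinset.erase a).Nonempty := ⟨a', by simp [ha', haa.symm]⟩
    obtain ⟨c, hc, hmin⟩ := ((u 0).toFinset.erase a).exists_min_image (fun c => dist c a) hfin
    have hca : c ≠ a := (Finset.mem_erase.1 hc).1
    have hpos : 0 < dist c a := dist_pos.2 hca
    refine ⟨dist c a / 2, by positivity, fun e he hea => ?_⟩
    have := hmin e (by simp [he, hea])
    linarith
  have hsph : ∀ c ∈ u 0, c ∉ sphere a r := by
    intro c hc hcs
    by_cases hca : c = a
    · subst hca; simp at hcs; linarith
    · have := hra c hc hca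
      rw [mem_sphere] at hcs; linarith
  set u₁ : ℂ → Multiset ℂ := fun η => (u η).filter fun c => c ∈ ball a r with hu₁
  set u₂ : ℂ → Multiset ℂ := fun η => (u η).filter fun c => ¬ c ∈ ball a r with hu₂
  have hadd : ∀ η, u₁ η + u₂ η = u η := fun η => Multiset.filter_add_not _ _
  have hs₁ : SymHol u₁ 0 := hu.cluster_symHol hr hsph
  have hs₂ : SymHol u₂ 0 := by
    intro k
    refine ((hu k).sub (hs₁ k)).congr (Eventually.of_forall fun η => ?_)
    simp only [← hadd η, Multiset.map_add, Multiset.sum_add]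
    ring
  have hcadd : Multiset.card (u₁ 0) + Multiset.card (u₂ 0) = d := by
    rw [← Multiset.card_add, hadd, hud]
  have hc₁ : 0 < Multiset.card (u₁ 0) :=
    Multiset.card_pos_iff_exists_mem.2 ⟨a, Multiset.mem_filter.2 ⟨ha, mem_ball_self hr⟩⟩
  have hc₂ : 0 < Multiset.card (u₂ 0) := by
    refine Multiset.card_pos_iff_exists_mem.2 ⟨a', Multiset.mem_filter.2 ⟨ha', fun h => ?_⟩⟩
    have := hra a' ha' haa.symm
    rw [mem_ball] at h; linarith
  obtain ⟨M₁, hM₁, L₁, hL₁, hev₁⟩ := ih _ (by omega) u₁ hs₁ rfl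
  have hs₂' : SymHol (fun η => u₂ (η ^ M₁)) 0 := by
    refine SymHol.comp (s := u₂) (g := fun η : ℂ => η ^ M₁) ?_ (Hol.of_diff (by fun_prop) _)
    rw [zero_pow (by omega)]; exact hs₂
  obtain ⟨M₂, hM₂, L₂, hL₂, hev₂⟩ := ih (Multiset.card (u₂ 0)) (by omega) _ hs₂'
    (by rw [zero_pow (by omega)])
  have hNpos : 1 ≤ M₂ * M₁ := Nat.mul_pos hM₂ hM₁
  have hM0 : 1 ≤ M₂ * M₁ * b := Nat.mul_pos hNpos hb
  have hpow : ∀ j : ℕ, 1 ≤ j → ∀ {ℓ : ℂ → ℂ}, AnalyticAt ℂ ℓ 0 →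
      AnalyticAt ℂ (fun η => ℓ (η ^ j)) 0 := by
    intro j hj ℓ hℓ
    refine AnalyticAt.comp (g := ℓ) (f := fun η => η ^ j) ?_ (by fun_prop)
    rw [zero_pow (by omega)]; exact hℓ
  set L₀ : Multiset (ℂ → ℂ) := L₁.map (fun ℓ η => ℓ (η ^ M₂)) + L₂ with hL₀
  have hL₀a : ∀ ℓ ∈ L₀, AnalyticAt ℂ ℓ 0 := by
    intro ℓ hℓ
    rcases Multiset.mem_add.1 hℓ with h | h
    · obtain ⟨ℓ', h', rfl⟩ := Multiset.mem_map.1 h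
      exact hpow M₂ hM₂ (hL₁ _ h')
    · exact hL₂ _ h
  refine ⟨M₂ * M₁ * b, hM0, L₀.map fun ℓ η => (η ^ (M₂ * M₁)) ^ q * ℓ η + m (η ^ (M₂ * M₁ * b)),
    ?_, ?_⟩
  · intro ℓ hℓ
    obtain ⟨ℓ', h', rfl⟩ := Multiset.mem_map.1 hℓ
    exact ((by fun_prop : AnalyticAt ℂ (fun η : ℂ => (η ^ (M₂ * M₁)) ^ q) 0).mul
      (hL₀a _ h')).add (hpow _ hM0 hmA)
  · filter_upwards [(tendsto_pow_punctured hM₂).eventually hev₁, hev₂,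
      (tendsto_pow_punctured hNpos).eventually htu] with η h1 h2 h3
    rw [hst, pow_mul η (M₂ * M₁) b, h3, ← hadd, pow_mul η M₂ M₁, h1, h2]
    simp [hL₀, Multiset.map_map, pow_mul]

end Puiseux

/-! ### Complex curve selection -/

section CurveSelection

/-- The complex curve selection property for a finite-dimensional space `E`: along an ultrafilter
converging to `0`, there is an analytic arc through `0` which satisfies all analytic equations that
hold along the ultrafilter and avoids a prescribed hypersurface avoided by the ultrafilter. -/
def CurveSel (E : Type*) [NormedAddCommGroup E] [NormedSpace ℂ E] : Prop :=
  ∀ 𝒰 : Ultrafilter E, (𝒰 : Filter E) ≤ 𝓝 0 → ∀ h : E → ℂ, Hol h 0 → (∀ᶠ x in 𝒰, h x ≠ 0) →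
    ∃ γ : ℂ → E, AnalyticAt ℂ γ 0 ∧ γ 0 = 0 ∧
      (∀ g : E → ℂ, Hol g 0 → (∀ᶠ x in 𝒰, g x = 0) → ∀ᶠ t in 𝓝 (0 : ℂ), g (γ t) = 0) ∧
      ∀ᶠ t in 𝓝[≠] (0 : ℂ), h (γ t) ≠ 0

section
variable {E : Type*} [NormedAddCommGroup E] [NormedSpace ℂ E]

/-- A nonzero holomorphic germ is nonzero along a line. -/
lemma exists_line {g : E → ℂ} (hg : Hol g 0) (hne : ∃ᶠ x in 𝓝 (0 : E), g x ≠ 0) :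
    ∃ v : E, ∀ᶠ t in 𝓝[≠] (0 : ℂ), g (t • v) ≠ 0 := by
  obtain ⟨R, hR, hRg⟩ := Metric.eventually_nhds_iff_ball.1 hg.ev
  obtain ⟨v, hv, hvR⟩ := (hne.and_eventually (ball_mem_nhds (0 : E) hR)).exists
  refine ⟨v, ?_⟩
  by_contra hcon
  have hfr : ∃ᶠ t in 𝓝[≠] (0 : ℂ), g (t • v) = 0 := by
    rw [not_eventually] at hcon
    exact hcon.mono fun t ht => not_not.1 ht
  set D : Set ℂ := (fun t : ℂ => t • v) ⁻¹' ball (0 : E) R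
  have hconv : Convex ℝ D := by
    have := (convex_ball (0 : E) R).linear_preimage
      ((LinearMap.toSpanSingleton ℂ E v).restrictScalars ℝ)
    exact this
  have hana : AnalyticOnNhd ℂ (fun t : ℂ => g (t • v)) D := by
    intro t ht
    rw [← hol_iff_analyticAt]
    exact Hol.comp (g := g) (f := fun t : ℂ => t • v) (hRg _ ht) (Hol.of_diff (by fun_prop) _)
  have h0 : (0 : ℂ) ∈ D := by simp [D, hR]
  have h1 : (1 : ℂ) ∈ D := by simpa [D] using hvR
  have := hana.eqOn_zero_of_preconnected_of_frequently_eq_zero hconv.isPreconnected h0 hfr h1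
  simp at this
  exact hv this

lemma Hol.comp_analytic [FiniteDimensional ℂ E] {g : E → ℂ}
    {γ : ℂ → E} {x : E} {t : ℂ} (hg : Hol g x) (hγ : AnalyticAt ℂ γ t) (hx : γ t = x) :
    AnalyticAt ℂ (fun t => g (γ t)) t := by
  have := FiniteDimensional.complete ℂ E
  rw [← hol_iff_analyticAt]
  refine Hol.comp (g := g) (f := γ) (hx ▸ hg) ?_
  filter_upwards [hγ.eventually_analyticAt] with y hy using hy.differentiableAt

lemma AnalyticAt.hol [FiniteDimensional ℂ E] {γ : ℂ → E} {t : ℂ} (hγ : AnalyticAt ℂ γ t) :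
    Hol γ t := by
  have := FiniteDimensional.complete ℂ E
  filter_upwards [hγ.eventually_analyticAt] with y hy using hy.differentiableAt

/-- The inductive step of curve selection. The equation `W = 0` places the ultrafilter on a branched
cover of `E` with fibres `θ x`. An arc for the image ultrafilter in `E` is lifted to finitely many
arcs by Puiseux's theorem, and one of them satisfies all the equations. To avoid `h = 0` on it, the
arc in `E` is chosen with `c e ≠ 0`, where `c e` is the last coefficient of the characteristic
polynomial of `h` on the fibres that does not vanish along the ultrafilter: the equation `g₀ = 0`
then forces `h ≠ 0`. -/
lemma curveSel_prod [FiniteDimensional ℂ E] (ih : CurveSel E) (𝒰 : Ultrafilter (E × ℂ))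
    (h𝒰 : (𝒰 : Filter (E × ℂ)) ≤ 𝓝 0) {W : E × ℂ → ℂ} (hW : Hol W 0)
    (hWu : ∀ᶠ p in 𝒰, W p = 0) (hW0 : ∀ᶠ z in 𝓝[≠] (0 : ℂ), W (0, z) ≠ 0)
    (h : E × ℂ → ℂ) (hh : Hol h 0) (hhu : ∀ᶠ p in 𝒰, h p ≠ 0) :
    ∃ γ : ℂ → E × ℂ, AnalyticAt ℂ γ 0 ∧ γ 0 = 0 ∧
      (∀ g : E × ℂ → ℂ, Hol g 0 → (∀ᶠ x in 𝒰, g x = 0) → ∀ᶠ t in 𝓝 (0 : ℂ), g (γ t) = 0) ∧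
      ∀ᶠ t in 𝓝[≠] (0 : ℂ), h (γ t) ≠ 0 := by
  classical
  obtain ⟨θ, hθ, hsm, r, hr, hroot⟩ := small_zeros hW hW0
  have hfst : Tendsto Prod.fst (𝓝 (0 : E × ℂ)) (𝓝 (0 : E)) := continuous_fst.tendsto 0
  have hsnd : Tendsto Prod.snd (𝓝 (0 : E × ℂ)) (𝓝 (0 : ℂ)) := continuous_snd.tendsto 0
  have hmem : ∀ᶠ p : E × ℂ in 𝒰, p.2 ∈ θ p.1 := by
    have h1 : ∀ᶠ p : E × ℂ in 𝓝 0, ‖p.2‖ < r := by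
      have := hsnd.eventually (ball_mem_nhds (0 : ℂ) hr)
      filter_upwards [this] with p hp using mem_ball_zero_iff.1 hp
    filter_upwards [h𝒰 h1, h𝒰 (hfst.eventually hroot), hWu] with p hp1 hp2 hp3
    exact hp2 _ hp1 hp3
  set 𝒰' : Ultrafilter E := 𝒰.map Prod.fst with h𝒰'
  have hle' : (𝒰' : Filter E) ≤ 𝓝 0 := by
    rw [h𝒰', Ultrafilter.coe_map]; exact (map_mono h𝒰).trans hfst
  have hev' : ∀ {p : E → Prop}, (∀ᶠ x in 𝒰', p x) ↔ ∀ᶠ q : E × ℂ in 𝒰, p q.1 := by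
    intro p; rw [h𝒰', Ultrafilter.coe_map, eventually_map]
  have hT : ∀ G : E × ℂ → ℂ, Hol G 0 → SymHol (fun x => (θ x).map fun a => G (x, a)) 0 :=
    fun G hG => hθ.map_small hsm hG
  -- `c i` is, up to sign, a coefficient of the characteristic polynomial of `h` on the fibres
  set d := Multiset.card (θ 0) with hd
  have hcard : ∀ᶠ x in 𝓝 (0 : E), Multiset.card (θ x) = d := hθ.card
  set c : ℕ → E → ℂ := fun i x => ((θ x).map fun a => h (x, a)).esymm i with hc
  have hcH : ∀ i, Hol (c i) 0 := fun i => (hT h hh).esymm i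
  obtain ⟨e, he, hce, hmax⟩ : ∃ e ≤ d, (∀ᶠ x in 𝒰', c e x ≠ 0) ∧
      ∀ i, e < i → i ≤ d → ∀ᶠ x in 𝒰', c i x = 0 := by
    set S := (Finset.range (d + 1)).filter fun i => ∀ᶠ x in 𝒰', c i x ≠ 0 with hS
    have hne : S.Nonempty := ⟨0, by simp [hS, hc, Multiset.esymm]⟩
    refine ⟨S.max' hne, ?_, ?_, fun i hi hid => ?_⟩
    · have := Finset.mem_filter.1 (S.max'_mem hne)
      have := Finset.mem_range.1 this.1
      omega
    · exact (Finset.mem_filter.1 (S.max'_mem hne)).2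
    · have hiS : i ∉ S := fun h => absurd (S.le_max' i h) (not_le.2 hi)
      have : ¬ ∀ᶠ x in 𝒰', c i x ≠ 0 := fun h =>
        hiS (Finset.mem_filter.2 ⟨Finset.mem_range.2 (by omega), h⟩)
      have := Ultrafilter.eventually_not.2 this
      simpa using this
  set g₀ : E × ℂ → ℂ := fun p =>
    ∑ j ∈ Finset.range (e + 1), ((-1) ^ j * c j p.1) * h p ^ (e - j) with hg₀
  have hg₀H : Hol g₀ 0 := by
    refine Hol.sum fun j _ => ((Hol.const _ _).mul ?_).mul (hh.pow _)
    exact Hol.comp (g := c j) (f := Prod.fst) (hcH j) (Hol.of_diff (by fun_prop) _)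
  have hg₀u : ∀ᶠ p in 𝒰, g₀ p = 0 := by
    have hall : ∀ᶠ p : E × ℂ in 𝒰, ∀ i ∈ Finset.range (d + 1), e < i → c i p.1 = 0 := by
      refine (eventually_all_finset _).2 fun i hi => ?_
      by_cases hei : e < i
      · have := hev'.1 (hmax i hei (by rw [Finset.mem_range] at hi; omega))
        filter_upwards [this] with p hp _ using hp
      · exact Eventually.of_forall fun p h => absurd h hei
    filter_upwards [hmem, hhu, hall, h𝒰 (hfst.eventually hcard)] with p h1 h2 h3 h4
    have h5 : (rootPoly ((θ p.1).map fun a => h (p.1, a))).eval (h p) = 0 := by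
      by_contra hcon
      exact rootPoly_eval_ne_zero.1 hcon (Multiset.mem_map.2 ⟨p.2, h1, rfl⟩)
    rw [rootPoly_eq_sum _ (d := d) (by simpa using h4), eval_finsetSum] at h5
    simp only [eval_mul, eval_C, eval_pow, eval_X] at h5
    have h6 : ∑ j ∈ Finset.range (d + 1), ((-1) ^ j * c j p.1) * h p ^ (d - j) =
        h p ^ (d - e) * g₀ p := by
      rw [hg₀, Finset.mul_sum, ← Finset.sum_subset (Finset.range_mono (by omega : e + 1 ≤ d + 1))]
      · refine Finset.sum_congr rfl fun j hj => ?_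
        rw [Finset.mem_range] at hj
        rw [show d - j = (d - e) + (e - j) by omega, pow_add]
        ring
      · intro j hj hj'
        rw [Finset.mem_range] at hj'
        rw [h3 j hj (by omega)]; simp
    have h7 : h p ^ (d - e) * g₀ p = 0 := h6.symm.trans h5
    exact (mul_eq_zero.1 h7).resolve_left (pow_ne_zero _ h2)
  obtain ⟨γ', hγ', hγ'0, hγ'P, hγ'c⟩ := ih 𝒰' hle' (c e) (hcH e) hce
  have hθγ : SymHol (fun t => θ (γ' t)) 0 :=
    SymHol.comp (s := θ) (g := γ') (by rw [hγ'0]; exact hθ) hγ'.hol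
  obtain ⟨M, hM, L, hL, hLev⟩ := puiseux _ _ hθγ rfl
  have hpowt := tendsto_pow_punctured hM
  have hM0 : (0 : ℂ) ^ M = 0 := zero_pow (by omega)
  have hγM : AnalyticAt ℂ (fun η : ℂ => γ' (η ^ M)) 0 := by
    refine AnalyticAt.comp (g := γ') (f := fun η => η ^ M) ?_ (by fun_prop)
    rw [hM0]; exact hγ'
  have hγM0 : γ' ((0 : ℂ) ^ M) = 0 := by rw [hM0, hγ'0]
  have hL0 : ∀ ℓ ∈ L, ℓ 0 = 0 := by
    intro ℓ hℓ
    rw [← norm_eq_zero]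
    refine le_antisymm (le_of_forall_pos_le_add fun ρ hρ => ?_) (norm_nonneg _)
    rw [zero_add]
    have h1 : Tendsto (fun η : ℂ => γ' (η ^ M)) (𝓝[≠] 0) (𝓝 0) := by
      have := hγM.continuousAt.tendsto
      rw [hγM0] at this
      exact this.mono_left nhdsWithin_le_nhds
    have h2 : Tendsto (fun η => ‖ℓ η‖) (𝓝[≠] 0) (𝓝 ‖ℓ 0‖) :=
      (hL ℓ hℓ).continuousAt.norm.tendsto.mono_left nhdsWithin_le_nhds
    refine le_of_tendsto h2 ?_
    filter_upwards [h1.eventually (hsm ρ hρ), hLev] with η h3 h4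
    exact (h3 (ℓ η) (by rw [h4]; exact Multiset.mem_map.2 ⟨ℓ, hℓ, rfl⟩)).le
  have hgarc : ∀ ℓ ∈ L, ∀ g : E × ℂ → ℂ, Hol g 0 →
      AnalyticAt ℂ (fun η => g (γ' (η ^ M), ℓ η)) 0 := by
    intro ℓ hℓ g hg
    exact hg.comp_analytic (hγM.prod (hL ℓ hℓ)) (by simp only [hγM0, hL0 ℓ hℓ]; rfl)
  -- one of the Puiseux arcs satisfies all the equations
  obtain ⟨ℓ, hℓ, hℓP⟩ : ∃ ℓ ∈ L, ∀ g : E × ℂ → ℂ, Hol g 0 → (∀ᶠ p in 𝒰, g p = 0) →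
      ∀ᶠ η in 𝓝 (0 : ℂ), g (γ' (η ^ M), ℓ η) = 0 := by
    by_contra! hcon
    -- the equations form a vector space, which is not the union of the finitely many proper
    -- subspaces of equations holding on a given arc: some equation `G` fails on all arcs
    let P : Submodule ℂ (E × ℂ → ℂ) :=
      { carrier := {g | Hol g 0 ∧ ∀ᶠ p in 𝒰, g p = 0}
        add_mem' := fun {a b} ha hb => ⟨ha.1.add hb.1, by
          filter_upwards [ha.2, hb.2] with p h1 h2; simp [h1, h2]⟩
        zero_mem' := ⟨Hol.const 0 0, Eventually.of_forall fun _ => rfl⟩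
        smul_mem' := fun k a ha => ⟨(Hol.const k 0).mul ha.1, by
          filter_upwards [ha.2] with p h1; simp [h1]⟩ }
    let K : (ℂ → ℂ) → Submodule ℂ P := fun ℓ =>
      { carrier := {g | ∀ᶠ η in 𝓝 (0 : ℂ), g.1 (γ' (η ^ M), ℓ η) = 0}
        add_mem' := fun {a b} ha hb => by
          rw [mem_ofPred_eq] at *
          filter_upwards [ha, hb] with η h1 h2
          simp [h1, h2]
        zero_mem' := Eventually.of_forall fun _ => rfl
        smul_mem' := fun k a ha => by
          rw [mem_ofPred_eq] at *
          filter_upwards [ha] with η h1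
          simp [h1] }
    have htop : (⊤ : Submodule ℂ P) ∉ (L.map K).toFinset := by
      intro hm
      obtain ⟨ℓ, hℓ, hK⟩ := Multiset.mem_map.1 (Multiset.mem_toFinset.1 hm)
      obtain ⟨g, hg, hgu, hgn⟩ := hcon ℓ hℓ
      have : (⟨g, hg, hgu⟩ : P) ∈ K ℓ := by rw [hK]; trivial
      exact hgn (Eventually.mono (show ∀ᶠ η in 𝓝 (0 : ℂ), g (γ' (η ^ M), ℓ η) = 0 from this)
        fun η h => not_not.2 h)
    have hun := Subspace.biUnion_ne_univ_of_top_notMem htop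
    rw [Set.ne_univ_iff_exists_notMem] at hun
    obtain ⟨⟨G, hG, hGu⟩, hGn⟩ := hun
    have hGℓ : ∀ ℓ ∈ L, ∀ᶠ η in 𝓝[≠] (0 : ℂ), G (γ' (η ^ M), ℓ η) ≠ 0 := by
      intro ℓ hℓ
      refine (hgarc ℓ hℓ G hG).eventually_eq_zero_or_eventually_ne_zero.resolve_left fun h => ?_
      apply hGn
      simp only [mem_iUnion]
      exact ⟨K ℓ, Multiset.mem_toFinset.2 (Multiset.mem_map.2 ⟨ℓ, hℓ, rfl⟩), h⟩
    have hGall : ∀ᶠ η in 𝓝[≠] (0 : ℂ), ∀ ℓ ∈ L.toFinset, G (γ' (η ^ M), ℓ η) ≠ 0 :=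
      (eventually_all_finset _).2 fun ℓ hℓ => hGℓ ℓ (Multiset.mem_toFinset.1 hℓ)
    -- the norm of `G` is an equation on `E`, so it vanishes on the arc in the base
    set Nm : E → ℂ := fun x => (rootPoly ((θ x).map fun a => G (x, a))).eval 0 with hNm
    have hNmH : Hol Nm 0 :=
      Hol.comp (g := fun p : E × ℂ => (rootPoly ((θ p.1).map fun a => G (p.1, a))).eval p.2)
        (f := fun x : E => (x, (0 : ℂ))) ((hT G hG).rootPoly_eval 0) (Hol.of_diff (by fun_prop) _)
    have hNmu : ∀ᶠ x in 𝒰', Nm x = 0 := by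
      refine hev'.2 ?_
      filter_upwards [hmem, hGu] with p h1 h2
      by_contra hcon
      exact rootPoly_eval_ne_zero.1 hcon (Multiset.mem_map.2 ⟨p.2, h1, h2⟩)
    have hNmγ := hγ'P Nm hNmH hNmu
    obtain ⟨η, h1, h2, h3⟩ := ((hpowt.eventually (nhdsWithin_le_nhds hNmγ)).and
      (hLev.and hGall)).exists
    have h4 : (0 : ℂ) ∈ (θ (γ' (η ^ M))).map fun a => G (γ' (η ^ M), a) := by
      by_contra hcon
      exact rootPoly_eval_ne_zero.2 hcon h1
    obtain ⟨a, ha, ha0⟩ := Multiset.mem_map.1 h4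
    rw [h2] at ha
    obtain ⟨ℓ, hℓ, rfl⟩ := Multiset.mem_map.1 ha
    exact h3 ℓ (Multiset.mem_toFinset.2 hℓ) ha0
  refine ⟨fun η => (γ' (η ^ M), ℓ η), hγM.prod (hL ℓ hℓ), ?_, hℓP, ?_⟩
  · simp only [hγM0, hL0 ℓ hℓ]; rfl
  · filter_upwards [nhdsWithin_le_nhds (hℓP g₀ hg₀H hg₀u), hpowt.eventually hγ'c] with η h1 h2 h3
    apply h2
    simp only [hg₀, h3] at h1
    rw [Finset.sum_range_succ, Finset.sum_eq_zero, zero_add] at h1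
    · simpa using h1
    · intro j hj
      rw [Finset.mem_range] at hj
      rw [zero_pow (by omega), mul_zero]

end

/-- Complex curve selection at the origin, by induction on the dimension. If no nontrivial equation
holds along the ultrafilter, a line on which `h ≠ 0` will do. Otherwise a direction `v` on which
some equation `W` is not identically zero is split off, and `curveSel_prod` applies. -/
lemma curveSel (N : ℕ) : ∀ (E : Type) [NormedAddCommGroup E] [NormedSpace ℂ E]
    [FiniteDimensional ℂ E], Module.finrank ℂ E = N → CurveSel E := by
  induction N using Nat.strong_induction_on with
  | _ N ih =>
  intro E _ _ _ hN 𝒰 h𝒰 h hh hhu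
  by_cases hP : ∀ g : E → ℂ, Hol g 0 → (∀ᶠ x in 𝒰, g x = 0) → ∀ᶠ x in 𝓝 (0 : E), g x = 0
  · obtain ⟨v, hv⟩ := exists_line hh (hhu.frequently.filter_mono h𝒰)
    refine ⟨fun t => t • v, by fun_prop, by simp, fun g hg hgu => ?_, hv⟩
    have h1 : Tendsto (fun t : ℂ => t • v) (𝓝 0) (𝓝 0) := by
      have : Continuous fun t : ℂ => t • v := by fun_prop
      simpa using this.tendsto 0
    exact h1.eventually (hP g hg hgu)
  · push Not at hP
    obtain ⟨W, hW, hWu, hWn⟩ := hP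
    obtain ⟨v, hv⟩ := exists_line hW hWn
    have hW0 : W 0 = 0 := by
      have h1 : Tendsto W 𝒰 (𝓝 (W 0)) := hW.cont.tendsto.mono_left h𝒰
      have h2 : Tendsto W 𝒰 (𝓝 0) := tendsto_const_nhds.congr' (hWu.mono fun x hx => hx.symm)
      exact tendsto_nhds_unique h1 h2
    have hv0 : v ≠ 0 := by
      rintro rfl
      obtain ⟨t, ht⟩ := hv.exists
      simp [hW0] at ht
    obtain ⟨φ, hφ⟩ := SeparatingDual.exists_eq_one (R := ℂ) hv0
    have hri : Function.RightInverse (ContinuousLinearMap.toSpanSingleton ℂ v) φ := fun z => by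
      simp [hφ]
    let A : E ≃L[ℂ] (φ.ker × ℂ) :=
      (ContinuousLinearEquiv.equivOfRightInverse φ (ContinuousLinearMap.toSpanSingleton ℂ v)
        hri).trans (ContinuousLinearEquiv.prodComm ℂ ℂ φ.ker)
    have hAs : ∀ z : ℂ, A.symm (0, z) = z • v := by
      intro z
      change (ContinuousLinearEquiv.equivOfRightInverse φ
        (ContinuousLinearMap.toSpanSingleton ℂ v) hri).symm (z, 0) = z • v
      rw [ContinuousLinearEquiv.equivOfRightInverse_symm_apply]
      simp
    have hlt : Module.finrank ℂ φ.ker < N := by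
      rw [← hN]
      refine Submodule.finrank_lt fun htop => ?_
      have : v ∈ (φ.ker : Submodule ℂ E) := by
        rw [htop]; trivial
      have : φ v = 0 := this
      rw [hφ] at this; exact one_ne_zero this
    have hcomp : ∀ g : E → ℂ, Hol g 0 → Hol (fun p => g (A.symm p)) 0 := fun g hg =>
      Hol.comp (g := g) (f := fun p => A.symm p) (by rw [map_zero]; exact hg)
        (Hol.of_diff A.symm.differentiable _)
    have hle : (𝒰.map A : Filter (φ.ker × ℂ)) ≤ 𝓝 0 := by
      rw [Ultrafilter.coe_map]
      have := A.continuous.tendsto 0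
      rw [map_zero] at this
      exact (map_mono h𝒰).trans this
    have hevA : ∀ {p : E → Prop}, (∀ᶠ x in 𝒰, p x) → ∀ᶠ q in (𝒰.map A), p (A.symm q) := by
      intro p hp
      rw [Ultrafilter.coe_map, eventually_map]
      simpa using hp
    obtain ⟨γ, h1, h2, h3, h4⟩ := curveSel_prod (ih _ hlt φ.ker rfl) (𝒰.map A) hle
      (hcomp W hW) (hevA hWu) (by simpa only [hAs] using hv) _ (hcomp h hh) (hevA hhu)
    refine ⟨fun t => A.symm (γ t), ?_, by simp [h2], fun g hg hgu => ?_, h4⟩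
    · exact (A.symm : (φ.ker × ℂ) →L[ℂ] E).analyticAt _ |>.comp h1
    · exact h3 _ (hcomp g hg) (hevA hgu)

/-- Complex curve selection at an arbitrary point. -/
lemma exists_curve {E : Type} [NormedAddCommGroup E] [NormedSpace ℂ E] [FiniteDimensional ℂ E]
    {q : E} (𝒰 : Ultrafilter E) (h𝒰 : (𝒰 : Filter E) ≤ 𝓝 q) {h : E → ℂ} (hh : Hol h q)
    (hhu : ∀ᶠ x in 𝒰, h x ≠ 0) :
    ∃ γ : ℂ → E, AnalyticAt ℂ γ 0 ∧ γ 0 = q ∧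
      (∀ g : E → ℂ, Hol g q → (∀ᶠ x in 𝒰, g x = 0) → ∀ᶠ t in 𝓝 (0 : ℂ), g (γ t) = 0) ∧
      ∀ᶠ t in 𝓝[≠] (0 : ℂ), h (γ t) ≠ 0 := by
  have hle : (𝒰.map (fun x => x - q) : Filter E) ≤ 𝓝 0 := by
    rw [Ultrafilter.coe_map]
    have : Tendsto (fun x => x - q) (𝓝 q) (𝓝 (q - q)) :=
      (by fun_prop : Continuous fun x => x - q).tendsto q
    rw [sub_self] at this
    exact (map_mono h𝒰).trans this
  have hcomp : ∀ g : E → ℂ, Hol g q → Hol (fun x => g (x + q)) 0 := fun g hg =>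
    Hol.comp (g := g) (f := fun x => x + q) (by simpa using hg) (Hol.of_diff (by fun_prop) _)
  have hev : ∀ {p : E → Prop}, (∀ᶠ x in 𝒰, p x) → ∀ᶠ x in 𝒰.map (fun x => x - q), p (x + q) := by
    intro p hp
    rw [Ultrafilter.coe_map, eventually_map]
    simpa using hp
  obtain ⟨γ, h1, h2, h3, h4⟩ := curveSel _ E rfl _ hle _ (hcomp h hh) (hev hhu)
  exact ⟨fun t => γ t + q, h1.add analyticAt_const, by simp [h2],
    fun g hg hgu => h3 _ (hcomp g hg) (hev hgu), h4⟩

end CurveSelection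

/-! ### A Łojasiewicz-type inequality -/

section Loja

lemma ultra_lim {X Y : Type*} [TopologicalSpace Y] (𝒱 : Ultrafilter X) {K : Set Y}
    (hK : IsCompact K) {φ : X → Y} (h : ∀ᶠ x in 𝒱, φ x ∈ K) :
    ∃ y ∈ K, Tendsto φ 𝒱 (𝓝 y) := by
  obtain ⟨y, hy, hle⟩ := hK.ultrafilter_le_nhds' (𝒱.map φ) h
  exact ⟨y, hy, hle⟩

/-- Curve selection for the image of an ultrafilter under a map. -/
lemma exists_curve_map {X F : Type} [NormedAddCommGroup F] [NormedSpace ℂ F]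
    [FiniteDimensional ℂ F] {q : F} (𝒱 : Ultrafilter X) {Ψ : X → F} (hΨ : Tendsto Ψ 𝒱 (𝓝 q))
    {h : F → ℂ} (hh : Hol h q) (hhu : ∀ᶠ x in 𝒱, h (Ψ x) ≠ 0) :
    ∃ γ : ℂ → F, AnalyticAt ℂ γ 0 ∧ γ 0 = q ∧
      (∀ g : F → ℂ, Hol g q → (∀ᶠ x in 𝒱, g (Ψ x) = 0) → ∀ᶠ t in 𝓝 (0 : ℂ), g (γ t) = 0) ∧
      ∀ᶠ t in 𝓝[≠] (0 : ℂ), h (γ t) ≠ 0 :=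
  exists_curve (𝒱.map Ψ) hΨ hh hhu

lemma clm_eventually_eq_zero {X E : Type*} [NormedAddCommGroup E] [NormedSpace ℂ E]
    [FiniteDimensional ℂ E] {l : Filter X} {Φ : X → E →L[ℂ] ℂ}
    (h : ∀ v, ∀ᶠ x in l, Φ x v = 0) : ∀ᶠ x in l, Φ x = 0 := by
  have : ∀ᶠ x in l, ∀ i, Φ x (Module.finBasis ℂ E i) = 0 := eventually_all.2 fun i => h _
  filter_upwards [this] with x hx
  have : (Φ x : E →ₗ[ℂ] ℂ) = 0 := (Module.finBasis ℂ E).ext fun i => by simpa using hx i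
  ext v
  exact DFunLike.congr_fun this v

/-- The logarithmic derivative `t φ' / φ` tends to the vanishing order of `φ` at `0`. -/
lemma logDeriv_limit {φ : ℂ → ℂ} (hφ : AnalyticAt ℂ φ 0) (hne : ∀ᶠ t in 𝓝[≠] (0 : ℂ), φ t ≠ 0) :
    ∃ k : ℕ, (φ 0 = 0 → k ≠ 0) ∧
      Tendsto (fun t => t * deriv φ t / φ t) (𝓝[≠] 0) (𝓝 (k : ℂ)) := by
  have hnz : ¬ ∀ᶠ z in 𝓝 (0 : ℂ), φ z = 0 := by
    intro h
    obtain ⟨t, h1, h2⟩ := (hne.and (nhdsWithin_le_nhds h)).exists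
    exact h1 h2
  obtain ⟨k, g, hg, hg0, hgφ⟩ := (hφ.exists_eventuallyEq_pow_smul_nonzero_iff).2 hnz
  have hgφ : φ =ᶠ[𝓝 0] fun z => z ^ k * g z := by
    have h' : ∀ᶠ z in 𝓝 (0 : ℂ), φ z = z ^ k * g z := by simpa using hgφ
    exact h'
  refine ⟨k, ?_, ?_⟩
  · rintro h rfl
    have := hgφ.self_of_nhds
    simp [h] at this
    exact hg0 this.symm
  · have hlim : Tendsto (fun t => (k : ℂ) + t * deriv g t / g t) (𝓝[≠] 0) (𝓝 (k : ℂ)) := by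
      have : ContinuousAt (fun t => (k : ℂ) + t * deriv g t / g t) 0 := by
        have h1 := hg.deriv.continuousAt
        have h2 := hg.continuousAt
        fun_prop (disch := assumption)
      have := this.tendsto.mono_left (nhdsWithin_le_nhds (s := {0}ᶜ))
      simpa using this
    refine hlim.congr' ?_
    filter_upwards [nhdsWithin_le_nhds hgφ.deriv, nhdsWithin_le_nhds hgφ, self_mem_nhdsWithin,
      nhdsWithin_le_nhds (hg.continuousAt.eventually_ne hg0),
      nhdsWithin_le_nhds hg.eventually_analyticAt] with t h1 h2 h3 h4 h5
    have h6 : HasDerivAt (fun z => z ^ k * g z)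
        ((k * t ^ (k - 1)) * g t + t ^ k * deriv g t) t :=
      (hasDerivAt_pow k t).mul h5.differentiableAt.hasDerivAt
    rw [h1, h2, h6.deriv]
    have ht : t ≠ 0 := h3
    rcases Nat.eq_zero_or_pos k with rfl | hk
    · simp
    · obtain ⟨j, rfl⟩ : ∃ j, k = j + 1 := ⟨k - 1, by omega⟩
      simp only [Nat.add_sub_cancel]
      field_simp
      ring

/-- A Łojasiewicz-type inequality: `f` is `o(‖Df‖)` at its zeros. Otherwise `Df = f w` on some arc,
with `w` bounded, so that `t φ' / φ → 0` for `φ` the restriction of `f` to the arc, contradicting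
that `φ` has positive order. -/
lemma loja {E : Type} [NormedAddCommGroup E] [NormedSpace ℂ E] [FiniteDimensional ℂ E]
    {f : E → ℂ} {p : E} (hf : Hol f p) (hp : f p = 0) (C : ℝ) :
    ∀ᶠ x in 𝓝 p, f x ≠ 0 → C * ‖f x‖ ≤ ‖fderiv ℂ f x‖ := by
  by_contra hcon
  rw [not_eventually] at hcon
  have hcon : ∃ᶠ x in 𝓝 p, f x ≠ 0 ∧ ‖fderiv ℂ f x‖ < C * ‖f x‖ := by
    refine hcon.mono fun x hx => ?_
    push Not at hx; exact hx
  have := frequently_iff_neBot.1 hcon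
  set 𝒱 : Ultrafilter E := Ultrafilter.of (𝓝 p ⊓ 𝓟 {x | f x ≠ 0 ∧ ‖fderiv ℂ f x‖ < C * ‖f x‖})
  have h𝒱 : (𝒱 : Filter E) ≤ 𝓝 p := (Ultrafilter.of_le _).trans inf_le_left
  have h𝒱f : ∀ᶠ x in 𝒱, f x ≠ 0 ∧ ‖fderiv ℂ f x‖ < C * ‖f x‖ :=
    ((Ultrafilter.of_le _).trans inf_le_right) (mem_principal_self _)
  have : ProperSpace (E →L[ℂ] ℂ) := FiniteDimensional.proper ℂ _
  obtain ⟨w₀, -, hw₀⟩ := ultra_lim 𝒱 (isCompact_closedBall (0 : E →L[ℂ] ℂ) C)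
    (φ := fun x => (f x)⁻¹ • fderiv ℂ f x) (by
      filter_upwards [h𝒱f] with x hx
      have : 0 < ‖f x‖ := norm_pos_iff.2 hx.1
      rw [mem_closedBall_zero_iff, norm_smul, norm_inv, inv_mul_le_iff₀ this, mul_comm]
      exact hx.2.le)
  have hfF : Hol (fun y : E × (E →L[ℂ] ℂ) => f y.1) (p, w₀) :=
    Hol.comp (g := f) (f := Prod.fst) hf (Hol.of_diff (by fun_prop) _)
  obtain ⟨γ, hγ, hγ0, hγP, hγh⟩ := exists_curve_map 𝒱
    (Ψ := fun x => (x, (f x)⁻¹ • fderiv ℂ f x)) (q := (p, w₀))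
    ((tendsto_id.mono_left h𝒱).prodMk_nhds hw₀) hfF (h𝒱f.mono fun x hx => hx.1)
  have heq : ∀ᶠ t in 𝓝 (0 : ℂ), fderiv ℂ f (γ t).1 - f (γ t).1 • (γ t).2 = 0 := by
    refine clm_eventually_eq_zero fun v => ?_
    refine hγP (fun y => (fderiv ℂ f y.1 - f y.1 • y.2) v) ?_ ?_
    · refine Hol.sub (f := fun y : E × (E →L[ℂ] ℂ) => fderiv ℂ f y.1 v)
        (g := fun y : E × (E →L[ℂ] ℂ) => f y.1 * y.2 v) ?_ (hfF.mul (Hol.of_diff (by fun_prop) _))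
      exact Hol.comp (g := fun x => fderiv ℂ f x v) (f := Prod.fst) (hf.fderiv_apply v)
        (Hol.of_diff (by fun_prop) _)
    · filter_upwards [h𝒱f] with x hx
      simp [hx.1]
  have := FiniteDimensional.complete ℂ E
  have hx : AnalyticAt ℂ (fun t => (γ t).1) 0 :=
    ((ContinuousLinearMap.fst ℂ E (E →L[ℂ] ℂ)).analyticAt _).comp hγ
  have hw : AnalyticAt ℂ (fun t => (γ t).2) 0 :=
    ((ContinuousLinearMap.snd ℂ E (E →L[ℂ] ℂ)).analyticAt _).comp hγ
  have hx0 : (γ 0).1 = p := by rw [hγ0]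
  have hφ : AnalyticAt ℂ (fun t => f (γ t).1) 0 := hf.comp_analytic hx hx0
  obtain ⟨k, hk, hlim⟩ := logDeriv_limit hφ hγh
  have hlim2 : Tendsto (fun t => t * (γ t).2 (deriv (fun t => (γ t).1) t)) (𝓝[≠] (0 : ℂ))
      (𝓝 0) := by
    have : ContinuousAt (fun t => t * (γ t).2 (deriv (fun t => (γ t).1) t)) 0 :=
      continuousAt_id.mul (hw.continuousAt.clm_apply hx.deriv.continuousAt)
    have := this.tendsto.mono_left (nhdsWithin_le_nhds (s := {0}ᶜ))
    simpa using this
  have hfev : ∀ᶠ t in 𝓝 (0 : ℂ), DifferentiableAt ℂ f (γ t).1 := by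
    have := hx.continuousAt.tendsto
    rw [hx0] at this
    exact this.eventually hf
  have hkey : Tendsto (fun t => t * deriv (fun t => f (γ t).1) t / f (γ t).1) (𝓝[≠] (0 : ℂ))
      (𝓝 0) := by
    refine hlim2.congr' ?_
    filter_upwards [nhdsWithin_le_nhds heq, hγh, nhdsWithin_le_nhds hfev,
      nhdsWithin_le_nhds hx.eventually_analyticAt] with t h1 h2 h3 h4
    have h5 := h3.hasFDerivAt.comp_hasDerivAt t h4.differentiableAt.hasDerivAt
    have h6 : deriv (fun t => f (γ t).1) t = fderiv ℂ f (γ t).1 (deriv (fun t => (γ t).1) t) :=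
      h5.deriv
    rw [h6, sub_eq_zero.1 h1]
    simp only [smul_apply, smul_eq_mul]
    field_simp
  have := tendsto_nhds_unique hlim hkey
  exact hk (by rw [hx0, hp]) (by exact_mod_cast this)

end Loja

/-! ### The gradient of `arg f` is not nearly radial -/

section Radial

lemma Hol.continuousAt_fderiv {E : Type} [NormedAddCommGroup E] [NormedSpace ℂ E]
    [FiniteDimensional ℂ E] {f : E → ℂ} {p : E} (hf : Hol f p) :
    ContinuousAt (fderiv ℂ f) p :=
  continuousAt_clm_apply.2 fun v => (hf.fderiv_apply v).cont

/-- The gradient of `arg f` is far from radial near `0`. At bad points `x`, put `u = x / ‖x‖`,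
`ν = Df / ‖Df‖`, and let `(a, β)` be the pair `(‖Df‖ ‖x‖, f x)` normalised to `|a| + |β| = 1`.
Let `u₀, ν₀, a₀, β₀` be limits along an ultrafilter of bad points. Logarithmic derivatives along an
arc give `k β₀ = a₀ p ν₀(u₀)`, where `k` and `p` are the orders of `f` and of the radial coordinate.
So `ν₀(u₀) · conj β₀` is real, while the bad points keep its imaginary part at least `δ |β₀|`. Hence
`β₀ = 0`, then `a₀ = 0`, which is impossible. -/
lemma im_fderiv_self_le {E : Type} [NormedAddCommGroup E] [NormedSpace ℂ E]
    [FiniteDimensional ℂ E] {f : E → ℂ} (hf : Hol f 0) (hf0 : f 0 = 0) {δ : ℝ} (hδ : 0 < δ) :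
    ∀ᶠ x in 𝓝 0, f x ≠ 0 → |(fderiv ℂ f x x * (starRingEnd ℂ) (f x)).im| ≤
      δ * (‖x‖ * ‖fderiv ℂ f x‖ * ‖f x‖) := by
  by_contra hcon
  rw [not_eventually] at hcon
  set S : Set E := {x | f x ≠ 0 ∧ δ * (‖x‖ * ‖fderiv ℂ f x‖ * ‖f x‖) <
    |(fderiv ℂ f x x * (starRingEnd ℂ) (f x)).im|} with hS
  have hcon : ∃ᶠ x in 𝓝 (0 : E), x ∈ S := by
    refine hcon.mono fun x hx => ?_
    push Not at hx; exact hx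
  have : (𝓝 (0 : E) ⊓ 𝓟 S).NeBot := frequently_iff_neBot.1 hcon
  set 𝒱 : Ultrafilter E := Ultrafilter.of (𝓝 0 ⊓ 𝓟 S)
  have h𝒱 : (𝒱 : Filter E) ≤ 𝓝 0 := (Ultrafilter.of_le _).trans inf_le_left
  have h𝒱f : ∀ᶠ x in 𝒱, x ∈ S :=
    ((Ultrafilter.of_le _).trans inf_le_right) (mem_principal_self _)
  have : ProperSpace (E →L[ℂ] ℂ) := FiniteDimensional.proper ℂ _
  have : ProperSpace E := FiniteDimensional.proper ℂ _
  have hcE := FiniteDimensional.complete ℂ E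
  have hpos : ∀ x ∈ S, 0 < ‖x‖ ∧ 0 < ‖fderiv ℂ f x‖ ∧ 0 < ‖f x‖ := by
    rintro x ⟨h1, h2⟩
    refine ⟨norm_pos_iff.2 ?_, norm_pos_iff.2 ?_, norm_pos_iff.2 h1⟩
    · rintro rfl; exact h1 hf0
    · intro h; simp [h] at h2
  set τ : E → ℂ := fun x => (‖x‖ : ℂ)
  set u : E → E := fun x => (‖x‖ : ℂ)⁻¹ • x
  set σ : E → ℂ := fun x => (‖fderiv ℂ f x‖ : ℂ)
  set ν : E → E →L[ℂ] ℂ := fun x => (‖fderiv ℂ f x‖ : ℂ)⁻¹ • fderiv ℂ f x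
  set r : E → ℝ := fun x => ‖fderiv ℂ f x‖ * ‖x‖ + ‖f x‖
  set a : E → ℝ := fun x => ‖fderiv ℂ f x‖ * ‖x‖ / r x
  set β : E → ℂ := fun x => f x / r x
  have hτ : Tendsto τ 𝒱 (𝓝 0) := by
    have : Tendsto τ (𝓝 0) (𝓝 (τ 0)) := by
      have : Continuous τ := by fun_prop
      exact this.tendsto 0
    have h0 : τ 0 = 0 := by simp [τ]
    rw [h0] at this
    exact this.mono_left h𝒱
  have hσ : Tendsto σ 𝒱 (𝓝 (‖fderiv ℂ f 0‖ : ℂ)) :=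
    ((Complex.continuous_ofReal.tendsto _).comp hf.continuousAt_fderiv.norm).mono_left h𝒱
  obtain ⟨u₀, hu₀m, hu₀⟩ := ultra_lim 𝒱 (isCompact_closedBall (0 : E) 1) (φ := u) (by
    filter_upwards [h𝒱f] with x hx
    obtain ⟨h1, h2, h3⟩ := hpos x hx
    simp [u, norm_smul, h1.ne'])
  obtain ⟨ν₀, hν₀m, hν₀⟩ := ultra_lim 𝒱 (isCompact_closedBall (0 : E →L[ℂ] ℂ) 1) (φ := ν) (by
    filter_upwards [h𝒱f] with x hx
    obtain ⟨h1, h2, h3⟩ := hpos x hx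
    simp [ν, norm_smul, h2.ne'])
  have hr : ∀ x ∈ S, 0 < r x := fun x hx => by
    obtain ⟨h1, h2, h3⟩ := hpos x hx
    positivity
  have hab : ∀ x ∈ S, |a x| + ‖β x‖ = 1 := fun x hx => by
    have := hr x hx
    have ha : 0 ≤ a x := by positivity
    rw [abs_of_nonneg ha]
    simp only [a, β, norm_div, Complex.norm_real, Real.norm_eq_abs, abs_of_pos this]
    rw [← add_div]
    exact div_self this.ne'
  obtain ⟨a₀, -, ha₀⟩ := ultra_lim 𝒱 (isCompact_closedBall (0 : ℝ) 1) (φ := a) (by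
    filter_upwards [h𝒱f] with x hx
    have := hab x hx
    have := norm_nonneg (β x)
    rw [mem_closedBall_zero_iff, Real.norm_eq_abs]; linarith)
  obtain ⟨β₀, -, hβ₀⟩ := ultra_lim 𝒱 (isCompact_closedBall (0 : ℂ) 1) (φ := β) (by
    filter_upwards [h𝒱f] with x hx
    have := hab x hx
    have := abs_nonneg (a x)
    rw [mem_closedBall_zero_iff]; linarith)
  have hc₀ : Tendsto (fun x => ν x (u x)) 𝒱 (𝓝 (ν₀ u₀)) := by
    have hc : Continuous fun z : (E →L[ℂ] ℂ) × E => z.1 z.2 := by fun_prop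
    exact (hc.tendsto (ν₀, u₀)).comp (hν₀.prodMk_nhds hu₀)
  have hsum : |a₀| + ‖β₀‖ = 1 := by
    refine tendsto_nhds_unique (ha₀.abs.add hβ₀.norm) ?_
    refine tendsto_const_nhds.congr' ?_
    filter_upwards [h𝒱f] with x hx using (hab x hx).symm
  have hval : ∀ x ∈ S, fderiv ℂ f x x = (‖fderiv ℂ f x‖ * ‖x‖ : ℝ) * ν x (u x) := fun x hx => by
    obtain ⟨h1, h2, h3⟩ := hpos x hx
    have h1' : (‖x‖ : ℂ) ≠ 0 := by exact_mod_cast h1.ne'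
    have h2' : (‖fderiv ℂ f x‖ : ℂ) ≠ 0 := by exact_mod_cast h2.ne'
    simp only [ν, u, smul_apply, map_smul, smul_eq_mul]
    push_cast
    field_simp
  have hdir : ∀ x ∈ S, δ * ‖β x‖ ≤ |(ν x (u x) * (starRingEnd ℂ) (β x)).im| := fun x hx => by
    obtain ⟨h1, h2, h3⟩ := hpos x hx
    have hrx := hr x hx
    have h4 := hx.2
    rw [hval x hx] at h4
    have hfb : f x = (r x : ℝ) * β x := by
      have : (r x : ℂ) ≠ 0 := by exact_mod_cast hrx.ne'
      simp only [β]; field_simp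
    have hm : ((‖fderiv ℂ f x‖ * ‖x‖ : ℝ) * ν x (u x) * (starRingEnd ℂ) (f x)) =
        ((‖fderiv ℂ f x‖ * ‖x‖ * r x : ℝ) : ℂ) * (ν x (u x) * (starRingEnd ℂ) (β x)) := by
      rw [hfb, map_mul, Complex.conj_ofReal]; push_cast; ring
    have hnf : ‖f x‖ = r x * ‖β x‖ := by
      rw [hfb, norm_mul, Complex.norm_real, Real.norm_eq_abs, abs_of_pos hrx]
    have hP : 0 < ‖fderiv ℂ f x‖ * ‖x‖ * r x := by positivity
    rw [hm, Complex.im_ofReal_mul, abs_mul, abs_of_pos hP, hnf] at h4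
    have h5 : ‖fderiv ℂ f x‖ * ‖x‖ * r x * (δ * ‖β x‖) <
        ‖fderiv ℂ f x‖ * ‖x‖ * r x * |(ν x (u x) * (starRingEnd ℂ) (β x)).im| := by
      refine lt_of_eq_of_lt ?_ h4; ring
    exact (lt_of_mul_lt_mul_left h5 hP.le).le
  have hbig : ∀ x ∈ S, δ ≤ ‖ν x (u x)‖ := fun x hx => by
    have h1 := hdir x hx
    have h2 := Complex.abs_im_le_norm (ν x (u x) * (starRingEnd ℂ) (β x))
    rw [norm_mul, RCLike.norm_conj] at h2
    have h3 : 0 < ‖β x‖ := by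
      have := hr x hx
      have := (hpos x hx).2.2
      simp only [β, norm_div, Complex.norm_real, Real.norm_eq_abs]
      positivity
    exact le_of_mul_le_mul_right (h1.trans h2) h3
  have hdir₀ : δ * ‖β₀‖ ≤ |(ν₀ u₀ * (starRingEnd ℂ) β₀).im| := by
    refine le_of_tendsto_of_tendsto (hβ₀.norm.const_mul δ) (?_ : Tendsto
      (fun x => |(ν x (u x) * (starRingEnd ℂ) (β x)).im|) 𝒱 _) (h𝒱f.mono hdir)
    exact ((Complex.continuous_im.tendsto _).comp
      (hc₀.mul ((Complex.continuous_conj.tendsto _).comp hβ₀))).abs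
  have hbig₀ : δ ≤ ‖ν₀ u₀‖ := ge_of_tendsto hc₀.norm (h𝒱f.mono hbig)
  -- the coordinates of `F` are `‖x‖`, `x / ‖x‖`, `‖Df‖`, `Df / ‖Df‖`, `a`, `β`
  let F := (ℂ × E) × (ℂ × (E →L[ℂ] ℂ)) × (ℂ × ℂ)
  set q : F := ((0, u₀), ((‖fderiv ℂ f 0‖ : ℂ), ν₀), ((a₀ : ℂ), β₀)) with hq
  set Ψ : E → F := fun x => ((τ x, u x), (σ x, ν x), ((a x : ℂ), β x)) with hΨdef
  have hΨ : Tendsto Ψ 𝒱 (𝓝 q) :=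
    (hτ.prodMk_nhds hu₀).prodMk_nhds ((hσ.prodMk_nhds hν₀).prodMk_nhds
      (((Complex.continuous_ofReal.tendsto _).comp ha₀).prodMk_nhds hβ₀))
  have hΨx : ∀ x ∈ S, τ x • u x = x := fun x hx => by
    have h1' : (‖x‖ : ℂ) ≠ 0 := by exact_mod_cast (hpos x hx).1.ne'
    simp [τ, u, smul_smul, h1']
  have hfd : ∀ {Y : Type} [NormedAddCommGroup Y] [NormedSpace ℂ Y] {g : F → Y},
      Differentiable ℂ g → Hol g q := fun hg => Hol.of_diff hg _
  have hX : Hol (fun y : F => y.1.1 • y.1.2) q := hfd (by fun_prop)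
  have hXq : q.1.1 • q.1.2 = 0 := by simp [hq]
  have hfF : Hol (fun y : F => f (y.1.1 • y.1.2)) q :=
    Hol.comp (g := f) (f := fun y : F => y.1.1 • y.1.2) (by rw [hXq]; exact hf) hX
  have hh : Hol (fun y : F => y.1.1 * y.2.1.1 * f (y.1.1 • y.1.2)) q :=
    Hol.mul (hfd (by fun_prop)) hfF
  obtain ⟨γ, hγ, hγ0, hγP, hγh⟩ := exists_curve_map 𝒱 hΨ hh (by
    filter_upwards [h𝒱f] with x hx
    simp only [hΨdef, hΨx x hx]
    obtain ⟨h1, h2, h3⟩ := hpos x hx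
    have h1' : (‖x‖ : ℂ) ≠ 0 := by exact_mod_cast h1.ne'
    have h2' : (‖fderiv ℂ f x‖ : ℂ) ≠ 0 := by exact_mod_cast h2.ne'
    exact mul_ne_zero (mul_ne_zero h1' h2') hx.1)
  have heq1 : ∀ᶠ t in 𝓝 (0 : ℂ),
      fderiv ℂ f ((γ t).1.1 • (γ t).1.2) - (γ t).2.1.1 • (γ t).2.1.2 = 0 := by
    refine clm_eventually_eq_zero fun v => ?_
    refine hγP (fun y => (fderiv ℂ f (y.1.1 • y.1.2) - y.2.1.1 • y.2.1.2) v) ?_ ?_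
    · refine Hol.sub (f := fun y : F => fderiv ℂ f (y.1.1 • y.1.2) v)
        (g := fun y : F => y.2.1.1 * y.2.1.2 v) ?_ (hfd (by fun_prop))
      exact Hol.comp (g := fun x => fderiv ℂ f x v) (f := fun y : F => y.1.1 • y.1.2)
        (by rw [hXq]; exact hf.fderiv_apply v) hX
    · filter_upwards [h𝒱f] with x hx
      have h2' : (‖fderiv ℂ f x‖ : ℂ) ≠ 0 := by exact_mod_cast (hpos x hx).2.1.ne'
      simp only [hΨdef, hΨx x hx]
      simp [σ, ν, smul_smul, h2']
  have heq2 : ∀ᶠ t in 𝓝 (0 : ℂ), (γ t).2.2.1 * f ((γ t).1.1 • (γ t).1.2) -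
      (γ t).2.2.2 * ((γ t).2.1.1 * (γ t).1.1) = 0 := by
    refine hγP (fun y => y.2.2.1 * f (y.1.1 • y.1.2) - y.2.2.2 * (y.2.1.1 * y.1.1)) ?_ ?_
    · exact Hol.sub (Hol.mul (hfd (by fun_prop)) hfF) (hfd (by fun_prop))
    · filter_upwards [h𝒱f] with x hx
      simp only [hΨdef, hΨx x hx]
      simp only [a, β, σ, τ]
      push_cast
      ring
  have hfst : ∀ {A B : Type} [NormedAddCommGroup A] [NormedSpace ℂ A] [NormedAddCommGroup B]
      [NormedSpace ℂ B] {g : ℂ → A × B}, AnalyticAt ℂ g 0 → AnalyticAt ℂ (fun t => (g t).1) 0 :=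
    fun {A B} _ _ _ _ {g} hg => ((ContinuousLinearMap.fst ℂ A B).analyticAt _).comp hg
  have hsnd : ∀ {A B : Type} [NormedAddCommGroup A] [NormedSpace ℂ A] [NormedAddCommGroup B]
      [NormedSpace ℂ B] {g : ℂ → A × B}, AnalyticAt ℂ g 0 → AnalyticAt ℂ (fun t => (g t).2) 0 :=
    fun {A B} _ _ _ _ {g} hg => ((ContinuousLinearMap.snd ℂ A B).analyticAt _).comp hg
  have hT := hfst (hfst hγ)
  have hUu := hsnd (hfst hγ)
  have hN := hsnd (hfst (hsnd hγ))
  have hA := hfst (hsnd (hsnd hγ))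
  have hB := hsnd (hsnd (hsnd hγ))
  have hx : AnalyticAt ℂ (fun t => (γ t).1.1 • (γ t).1.2) 0 := hT.smul hUu
  have hx0 : (γ 0).1.1 • (γ 0).1.2 = 0 := by rw [hγ0, hXq]
  have hφ : AnalyticAt ℂ (fun t => f ((γ t).1.1 • (γ t).1.2)) 0 := hf.comp_analytic hx hx0
  obtain ⟨k, hk, hlimk⟩ := logDeriv_limit hφ (hγh.mono fun t ht => right_ne_zero_of_mul ht)
  obtain ⟨p, hp, hlimp⟩ := logDeriv_limit hT
    (hγh.mono fun t ht => left_ne_zero_of_mul (left_ne_zero_of_mul ht))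
  have hk := hk (by rw [hx0, hf0])
  have hp := hp (by rw [hγ0])
  have punct : ∀ {Y : Type} [TopologicalSpace Y] {g : ℂ → Y}, ContinuousAt g 0 →
      Tendsto g (𝓝[≠] 0) (𝓝 (g 0)) := fun hg => hg.tendsto.mono_left nhdsWithin_le_nhds
  have hlimL := hlimk.mul (punct hB.continuousAt)
  have hlimR := (punct hA.continuousAt).mul ((hlimp.mul (punct
    (hN.continuousAt.clm_apply hUu.continuousAt))).add
    (punct (continuousAt_id.mul (hN.continuousAt.clm_apply hUu.deriv.continuousAt))))
  have hfev : ∀ᶠ t in 𝓝 (0 : ℂ), DifferentiableAt ℂ f ((γ t).1.1 • (γ t).1.2) := by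
    have := hx.continuousAt.tendsto
    rw [hx0] at this
    exact this.eventually hf
  have hEq := tendsto_nhds_unique hlimL (hlimR.congr' (by
    filter_upwards [nhdsWithin_le_nhds heq1, nhdsWithin_le_nhds heq2, hγh,
      nhdsWithin_le_nhds hfev, nhdsWithin_le_nhds hT.eventually_analyticAt,
      nhdsWithin_le_nhds hUu.eventually_analyticAt] with t h1 h2 h3 h4 h5 h6
    have h7 := h4.hasFDerivAt.comp_hasDerivAt t
      (h5.differentiableAt.hasDerivAt.smul h6.differentiableAt.hasDerivAt)
    have h8 : deriv (fun t => f ((γ t).1.1 • (γ t).1.2)) t = _ := h7.deriv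
    rw [h8, sub_eq_zero.1 h1]
    have h2 := sub_eq_zero.1 h2
    have hf3 := right_ne_zero_of_mul h3
    have hs3 := right_ne_zero_of_mul (left_ne_zero_of_mul h3)
    have ht3 := left_ne_zero_of_mul (left_ne_zero_of_mul h3)
    simp only [smul_apply, smul_eq_mul, map_add, map_smul, Pi.mul_apply, id]
    have hB' : (γ t).2.2.2 = (γ t).2.2.1 * f ((γ t).1.1 • (γ t).1.2) /
      ((γ t).2.1.1 * (γ t).1.1) := by
      rw [h2]; field_simp
    rw [hB']
    clear h1 h2 h3 h4 h5 h6 h7 h8 hB'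
    generalize f ((γ t).1.1 • (γ t).1.2) = φ at *
    generalize (γ t).1.1 = T at *
    generalize (γ t).2.1.1 = s at *
    field_simp
    ring))
  have hEq' : (k : ℂ) * β₀ = a₀ * (p * ν₀ u₀) := by
    have := hEq
    simp only [hγ0, hq] at this
    simpa using this
  have hk' : (k : ℂ) ≠ 0 := by exact_mod_cast hk
  have hβe : β₀ = ((a₀ * p / k : ℝ) : ℂ) * ν₀ u₀ := by
    push_cast
    field_simp
    linear_combination hEq'
  have him : (ν₀ u₀ * (starRingEnd ℂ) β₀).im = 0 := by
    have : ν₀ u₀ * (starRingEnd ℂ) β₀ = ((a₀ * p / k * Complex.normSq (ν₀ u₀) : ℝ) : ℂ) := by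
      rw [hβe, map_mul, Complex.conj_ofReal]
      push_cast
      rw [← Complex.mul_conj]; ring
    rw [this, Complex.ofReal_im]
  rw [him, abs_zero] at hdir₀
  have hβ0 : ‖β₀‖ = 0 := le_antisymm (nonpos_of_mul_nonpos_right hdir₀ hδ) (norm_nonneg _)
  have hβ0' := norm_eq_zero.1 hβ0
  have hc0 : ν₀ u₀ ≠ 0 := norm_pos_iff.1 (hδ.trans_le hbig₀)
  rw [hβ0', mul_zero] at hEq'
  have ha0 : a₀ = 0 := by
    have hp' : (p : ℂ) ≠ 0 := by exact_mod_cast hp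
    rcases mul_eq_zero.1 hEq'.symm with h | h
    · exact_mod_cast h
    · exact absurd h (mul_ne_zero hp' hc0)
  rw [hβ0, ha0] at hsum
  simp at hsum

end Radial

/-! ### Trajectories of a turning field -/

section Trajectories

/-- A two-sided Grönwall inequality. -/
lemma growth_bound {u u' : ℝ → ℝ} {C : ℝ} (hu : ∀ t ∈ Icc (0 : ℝ) 1, HasDerivAt u (u' t) t)
    (hb : ∀ t ∈ Icc (0 : ℝ) 1, |u' t| ≤ C * u t) :
    ∀ t ∈ Icc (0 : ℝ) 1, u 0 * Real.exp (-(C * t)) ≤ u t ∧ u t ≤ u 0 * Real.exp (C * t) := by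
  have key : ∀ D : ℝ, ∀ t ∈ Icc (0 : ℝ) 1, HasDerivAt (fun s => u s * Real.exp (D * s))
      ((u' t + D * u t) * Real.exp (D * t)) t := fun D t ht => by
    have h1 : HasDerivAt (fun s => Real.exp (D * s)) (Real.exp (D * t) * (D * 1)) t :=
      ((hasDerivAt_id t).const_mul D).exp
    refine ((hu t ht).mul h1).congr_deriv ?_
    ring
  have hmono : MonotoneOn (fun s => u s * Real.exp (C * s)) (Icc 0 1) := by
    refine monotoneOn_of_deriv_nonneg (convex_Icc 0 1)
      (fun t ht => (key C t ht).continuousAt.continuousWithinAt)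
      (fun t ht => (key C t (interior_subset ht)).differentiableAt.differentiableWithinAt)
      fun t ht => ?_
    rw [(key C t (interior_subset ht)).deriv]
    have := neg_le_of_abs_le (hb t (interior_subset ht))
    exact mul_nonneg (by linarith) (Real.exp_pos _).le
  have hanti : AntitoneOn (fun s => u s * Real.exp (-C * s)) (Icc 0 1) := by
    refine antitoneOn_of_deriv_nonpos (convex_Icc 0 1)
      (fun t ht => (key (-C) t ht).continuousAt.continuousWithinAt)
      (fun t ht => (key (-C) t (interior_subset ht)).differentiableAt.differentiableWithinAt)
      fun t ht => ?_
    rw [(key (-C) t (interior_subset ht)).deriv]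
    have := le_of_abs_le (hb t (interior_subset ht))
    exact mul_nonpos_of_nonpos_of_nonneg (by linarith) (Real.exp_pos _).le
  intro t ht
  have h0 : (0 : ℝ) ∈ Icc (0 : ℝ) 1 := by simp
  have h1 := hmono h0 ht ht.1
  have h2 := hanti h0 ht ht.1
  simp only [mul_zero, Real.exp_zero, mul_one] at h1 h2
  have hE := Real.exp_pos (C * t)
  constructor
  · rw [Real.exp_neg]
    rw [← div_eq_mul_inv, div_le_iff₀ hE]; exact h1
  · rw [neg_mul, Real.exp_neg, ← div_eq_mul_inv, div_le_iff₀ hE] at h2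
    exact h2

/-- Picard–Lindelöf up to time one for a globally Lipschitz and bounded field. -/
lemma exists_trajectory {E : Type*} [NormedAddCommGroup E] [NormedSpace ℝ E] [CompleteSpace E]
    {v : E → E} {K : NNReal} (hK : LipschitzWith K v) {M : ℝ} (hM : ∀ x, ‖v x‖ ≤ M) (x : E) :
    ∃ γ : ℝ → E, γ 0 = x ∧ ∀ t ∈ Icc (0 : ℝ) 1, HasDerivAt γ (v (γ t)) t := by
  have hM0 : 0 ≤ M := (norm_nonneg _).trans (hM x)
  have hpl : IsPicardLindelof (fun _ => v) (⟨0, by norm_num, by norm_num⟩ : Icc (-1 : ℝ) 2) x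
      (⟨2 * M, by positivity⟩ : NNReal) 0 ⟨M, hM0⟩ K :=
    .of_time_independent (fun y _ => hM y) hK.lipschitzOnWith (by
      change M * max ((2 : ℝ) - 0) (0 - (-1)) ≤ 2 * M - 0
      norm_num
      linarith)
  obtain ⟨α, h0, hα⟩ := hpl.exists_eq_forall_mem_Icc_hasDerivWithinAt₀
  refine ⟨α, h0, fun t ht => ?_⟩
  exact (hα t ⟨by linarith [ht.1], by linarith [ht.2]⟩).hasDerivAt
    (Icc_mem_nhds (by linarith [ht.1]) (by linarith [ht.2]))

/-- The part of the open ball of radius `R` where `f` does not vanish. -/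
def Om {E : Type} [NormedAddCommGroup E] (f : E → ℂ) (R : ℝ) : Set E := {x | ‖x‖ < R ∧ f x ≠ 0}

variable {E : Type} [NormedAddCommGroup E] [InnerProductSpace ℂ E]

/-- `v` is a vector field turning the argument of `f` with constant speed `s`, tangent to all
spheres around `0`, controlling the growth of `|f|`, and tending to `0` at the zeros of `f`. -/
structure Good (f : E → ℂ) (R C s : ℝ) (v : E → E) : Prop where
  smooth : ContDiffOn ℝ 1 v (Om f R)
  tang : ∀ x ∈ Om f R, (inner ℂ x (v x)).re = 0
  turn : ∀ x ∈ Om f R, ∃ ρ : ℝ, |ρ| ≤ C ∧ fderiv ℂ f x (v x) = f x * (ρ + s * Complex.I)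
  small : ∀ η > 0, ∀ p, ‖p‖ < R → f p = 0 → ∀ᶠ x in 𝓝 p, f x ≠ 0 → ‖v x‖ ≤ η

lemma hasDerivAt_normSq {γ : ℝ → E} {γ' : E} {t : ℝ} (hγ : HasDerivAt γ γ' t) :
    HasDerivAt (fun s => ‖γ s‖ ^ 2) (2 * (inner ℂ (γ t) γ').re) t := by
  let := InnerProductSpace.rclikeToReal ℂ E
  exact hγ.norm_sq

lemma hasDerivAt_comp_curve {f : E → ℂ} {γ : ℝ → E} {γ' : E} {t : ℝ}
    (hf : DifferentiableAt ℂ f (γ t)) (hγ : HasDerivAt γ γ' t) :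
    HasDerivAt (fun s => f (γ s)) (fderiv ℂ f (γ t) γ') t := by
  have := (hf.hasFDerivAt.restrictScalars ℝ).comp_hasDerivAt t hγ
  exact this

/-- A priori estimates along a slowed down trajectory of a good field. -/
lemma Good.estimates {f : E → ℂ} {R C s : ℝ} {v : E → E} (hv : Good f R C s v)
    (hf : DifferentiableOn ℂ f (ball 0 R)) (hC : 0 ≤ C) {γ : ℝ → E} {c : E → ℝ}
    (hc : ∀ x, c x ∈ Icc (0 : ℝ) 1) (hc0 : ∀ x, x ∉ Om f R → c x = 0)
    (hγ : ∀ t ∈ Icc (0 : ℝ) 1, HasDerivAt γ (c (γ t) • v (γ t)) t) (h0 : γ 0 ∈ Om f R) :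
    ∀ t ∈ Icc (0 : ℝ) 1, ‖γ t‖ = ‖γ 0‖ ∧ ‖f (γ 0)‖ * Real.exp (-C) ≤ ‖f (γ t)‖ ∧
      ‖f (γ t)‖ ≤ ‖f (γ 0)‖ * Real.exp C := by
  have hnorm : ∀ t ∈ Icc (0 : ℝ) 1, ‖γ t‖ = ‖γ 0‖ := by
    intro t ht
    have := growth_bound (u := fun t => ‖γ t‖ ^ 2) (C := 0) (fun t ht => hasDerivAt_normSq (hγ t ht))
      (fun t ht => by
        rw [← Complex.coe_smul, inner_smul_right, Complex.re_ofReal_mul]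
        by_cases hx : γ t ∈ Om f R
        · simp [hv.tang _ hx]
        · simp [hc0 _ hx]) t ht
    simp only [zero_mul, neg_zero, Real.exp_zero, mul_one] at this
    exact (pow_left_inj₀ (norm_nonneg _) (norm_nonneg _) two_ne_zero).1
      (le_antisymm this.2 this.1)
  have hin : ∀ t ∈ Icc (0 : ℝ) 1, γ t ∈ ball (0 : E) R := fun t ht => by
    rw [mem_ball_zero_iff, hnorm t ht]; exact h0.1
  have hfd : ∀ t ∈ Icc (0 : ℝ) 1, DifferentiableAt ℂ f (γ t) := fun t ht =>
    (hf _ (hin t ht)).differentiableAt (isOpen_ball.mem_nhds (hin t ht))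
  have hgrow := growth_bound (u := fun t => ‖f (γ t)‖ ^ 2) (C := 2 * C)
    (fun t ht => (hasDerivAt_comp_curve (hfd t ht) (hγ t ht)).norm_sq) (fun t ht => by
      by_cases hx : γ t ∈ Om f R
      · obtain ⟨ρ, h1, h2⟩ := hv.turn _ hx
        have h3 : fderiv ℂ f (γ t) (c (γ t) • v (γ t)) =
            (c (γ t) : ℂ) * (f (γ t) * (ρ + s * Complex.I)) := by
          rw [← h2, ← Complex.coe_smul, map_smul, smul_eq_mul]
        have h4 : inner ℝ (f (γ t)) (fderiv ℂ f (γ t) (c (γ t) • v (γ t))) =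
            c (γ t) * ρ * ‖f (γ t)‖ ^ 2 := by
          rw [h3, Complex.inner, ← Complex.normSq_eq_norm_sq, Complex.normSq_apply]
          simp
          ring
        rw [h4]
        have h5 := hc (γ t)
        have h6 : |c (γ t) * ρ| ≤ C := by
          rw [abs_mul, abs_of_nonneg h5.1]
          calc c (γ t) * |ρ| ≤ 1 * |ρ| := by gcongr; exact h5.2
            _ ≤ C := by linarith
        rw [abs_mul, abs_mul, abs_two, abs_of_nonneg (sq_nonneg ‖f (γ t)‖)]
        nlinarith [sq_nonneg ‖f (γ t)‖]
      · have : 0 ≤ 2 * C * ‖f (γ t)‖ ^ 2 := by positivity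
        simpa [hc0 _ hx] using this)
  intro t ht
  refine ⟨hnorm t ht, ?_, ?_⟩
  · refine le_of_sq_le_sq ?_ (norm_nonneg _)
    refine le_trans ?_ (hgrow t ht).1
    rw [mul_pow, ← Real.exp_nat_mul]
    refine mul_le_mul_of_nonneg_left (Real.exp_le_exp.2 ?_) (sq_nonneg _)
    push_cast
    nlinarith [ht.2]
  · refine le_of_sq_le_sq ?_ (by positivity)
    refine (hgrow t ht).2.trans ?_
    rw [mul_pow, ← Real.exp_nat_mul]
    refine mul_le_mul_of_nonneg_left (Real.exp_le_exp.2 ?_) (sq_nonneg _)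
    push_cast
    nlinarith [ht.2]

/-- Trajectories of `v` on the unit time interval that stay in `Om f R`. -/
def Traj (f : E → ℂ) (R : ℝ) (v : E → E) (γ : ℝ → E) : Prop :=
  ∀ t ∈ Icc (0 : ℝ) 1, HasDerivAt γ (v (γ t)) t ∧ γ t ∈ Om f R

lemma Traj.estimates {f : E → ℂ} {R C s : ℝ} {v : E → E} (hv : Good f R C s v)
    (hf : DifferentiableOn ℂ f (ball 0 R)) (hC : 0 ≤ C) {γ : ℝ → E} (hγ : Traj f R v γ) :
    ∀ t ∈ Icc (0 : ℝ) 1, ‖γ t‖ = ‖γ 0‖ ∧ ‖f (γ 0)‖ * Real.exp (-C) ≤ ‖f (γ t)‖ ∧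
      ‖f (γ t)‖ ≤ ‖f (γ 0)‖ * Real.exp C := by
  classical
  refine hv.estimates hf hC (c := (Om f R).indicator 1) (fun x => ?_) (fun x hx => ?_)
    (fun t ht => ?_) (hγ 0 (by simp)).2
  · by_cases hx : x ∈ Om f R <;> simp [hx]
  · simp [hx]
  · have := hγ t ht
    simpa [this.2] using this.1

lemma Traj.reverse {f : E → ℂ} {R : ℝ} {v : E → E} {γ : ℝ → E} (hγ : Traj f R v γ) :
    Traj f R (fun x => -v x) (fun t => γ (1 - t)) := by
  intro t ht
  have := hγ (1 - t) ⟨by linarith [ht.2], by linarith [ht.1]⟩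
  exact ⟨this.1.comp_const_sub 1 t, this.2⟩

/-- Along a trajectory the argument of `f` turns by exactly `s`. -/
lemma Traj.arg {f : E → ℂ} {R C s : ℝ} {v : E → E} (hv : Good f R C s v)
    (hf : DifferentiableOn ℂ f (ball 0 R)) {γ : ℝ → E} (hγ : Traj f R v γ) :
    ∃ r : ℝ, f (γ 1) = r * f (γ 0) * Complex.exp (s * Complex.I) := by
  have hfd : ∀ t ∈ Icc (0 : ℝ) 1, DifferentiableAt ℂ f (γ t) := fun t ht =>
    have : γ t ∈ ball (0 : E) R := mem_ball_zero_iff.2 (hγ t ht).2.1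
    (hf _ this).differentiableAt (isOpen_ball.mem_nhds this)
  choose! ρ hρ1 hρ2 using hv.turn
  set G : ℝ → ℂ := fun t => f (γ t) * Complex.exp (-(t * (s * Complex.I)))
  have hG : ∀ t ∈ Icc (0 : ℝ) 1, HasDerivAt G (ρ (γ t) * G t) t := fun t ht => by
    have h1 := hasDerivAt_comp_curve (hfd t ht) (hγ t ht).1
    rw [hρ2 _ (hγ t ht).2] at h1
    have h2 : HasDerivAt (fun t : ℝ => Complex.exp (-(t * (s * Complex.I))))
        (Complex.exp (-(t * (s * Complex.I))) * -(1 * (s * Complex.I))) t :=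
      ((Complex.ofRealCLM.hasDerivAt (x := t)).mul_const (s * Complex.I)).neg.cexp
    refine (h1.mul h2).congr_deriv ?_
    simp only [G]
    ring
  set h : ℝ → ℝ := fun t => (G t * (starRingEnd ℂ) (G 0)).im
  have hh : ∀ t ∈ Icc (0 : ℝ) 1, HasDerivAt h (ρ (γ t) * h t) t := fun t ht => by
    have h1 := (hG t ht).mul_const ((starRingEnd ℂ) (G 0))
    have h2 := Complex.imCLM.hasFDerivAt.comp_hasDerivAt t h1
    refine h2.congr_deriv ?_
    simp only [h, Complex.imCLM_apply, mul_assoc, Complex.im_ofReal_mul]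
  have hbd := growth_bound (u := fun t => h t ^ 2) (C := 2 * C) (fun t ht => (hh t ht).pow 2)
    (fun t ht => by
      have h1 := hρ1 _ (hγ t ht).2
      have : ((2 : ℕ) : ℝ) * h t ^ (2 - 1) * (ρ (γ t) * h t) = 2 * ρ (γ t) * h t ^ 2 := by
        norm_num; ring
      rw [this, abs_mul, abs_mul, abs_two, abs_of_nonneg (sq_nonneg (h t))]
      nlinarith [sq_nonneg (h t)]) 1 (by simp)
  have h0 : h 0 = 0 := by
    simp only [h]
    rw [Complex.mul_conj, Complex.ofReal_im]
  have h1 : h 1 = 0 := by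
    have := hbd.2
    simp only [h0] at this
    norm_num at this
    exact this
  have hG0 : G 0 = f (γ 0) := by simp [G]
  have hne : f (γ 0) ≠ 0 := (hγ 0 (by simp)).2.2
  set d : ℝ := (G 1 * (starRingEnd ℂ) (G 0)).re
  have hd : G 1 * (starRingEnd ℂ) (G 0) = d := by
    apply Complex.ext <;> simp only [Complex.ofReal_re, Complex.ofReal_im]
    · rfl
    · exact h1
  have hns : (Complex.normSq (f (γ 0)) : ℂ) ≠ 0 := by
    exact_mod_cast (Complex.normSq_pos.2 hne).ne'
  have hG1 : G 1 = ((d / Complex.normSq (f (γ 0)) : ℝ) : ℂ) * f (γ 0) := by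
    push_cast
    field_simp
    rw [← hd, ← Complex.mul_conj, hG0]; ring
  refine ⟨d / Complex.normSq (f (γ 0)), ?_⟩
  rw [← hG1]
  simp only [G]
  rw [mul_assoc, ← Complex.exp_add]
  simp

end Trajectories

/-! ### The time-one map and its inverse -/

section TimeOne

lemma isOpen_Om {E : Type} [NormedAddCommGroup E] {f : E → ℂ} {R : ℝ}
    (hf : ContinuousOn f (ball 0 R)) : IsOpen (Om f R) := by
  have : Om f R = ball 0 R ∩ f ⁻¹' {0}ᶜ := by
    ext x; simp [Om]
  rw [this]
  exact hf.isOpen_inter_preimage isOpen_ball isOpen_compl_singleton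

variable {E : Type} [NormedAddCommGroup E] [InnerProductSpace ℂ E] [FiniteDimensional ℂ E]

/-- Multiplying a good field by a cut-off function makes it globally Lipschitz and bounded, without
changing it where `‖x‖ ≤ ε` and `m ≤ |f x|`. -/
lemma Good.cutoff {f : E → ℂ} {R C s ε m : ℝ} {v : E → E} (hv : Good f R C s v)
    (hf : ContinuousOn f (ball 0 R)) (hε : ε < R) (hm : 0 < m) :
    ∃ c : E → ℝ, (∀ x, c x ∈ Icc (0 : ℝ) 1) ∧ (∀ x, x ∉ Om f R → c x = 0) ∧
      (∀ x, ‖x‖ ≤ ε → m ≤ ‖f x‖ → c x = 1) ∧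
      ∃ (K : NNReal) (M : ℝ), LipschitzWith K (fun x => c x • v x) ∧ ∀ x, ‖c x • v x‖ ≤ M := by
  have : ProperSpace E := FiniteDimensional.proper ℂ E
  have hsub : closedBall (0 : E) ε ⊆ ball 0 R := closedBall_subset_ball hε
  set A : Set E := closedBall 0 ε ∩ (fun x => ‖f x‖) ⁻¹' Ici m
  have hAc : IsClosed A :=
    (hf.mono hsub).norm.preimage_isClosed_of_isClosed isClosed_closedBall isClosed_Ici
  have hA : IsCompact A := (isCompact_closedBall 0 ε).of_isClosed_subset hAc inter_subset_left
  have hO := isOpen_Om hf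
  have hAO : A ⊆ Om f R := fun x hx => ⟨mem_ball_zero_iff.1 (hsub hx.1), fun h => by
    have := hx.2
    simp only [mem_preimage, h, norm_zero, mem_Ici] at this
    linarith⟩
  obtain ⟨L, hL, hAL, hLO⟩ := exists_compact_between hA hO hAO
  obtain ⟨c, hc0, hc1, hc⟩ := exists_contMDiffMap_zero_one_of_isClosed
    (n := 1) (modelWithCornersSelf ℝ E) (s := (interior L)ᶜ) (t := A)
    isOpen_interior.isClosed_compl hAc (disjoint_left.2 fun x hx h => hx (hAL h))
  have hcd : ContDiff ℝ 1 c := c.contMDiff.contDiff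
  have hcz : ∀ x, x ∉ L → c x = 0 := fun x hx => hc0 fun h => hx (interior_subset h)
  have hsm : ContDiff ℝ 1 (fun x => c x • v x) := by
    rw [contDiff_iff_contDiffAt]
    intro x
    by_cases hx : x ∈ L
    · exact hcd.contDiffAt.smul (hv.smooth.contDiffAt (hO.mem_nhds (hLO hx)))
    · refine (contDiffAt_const (c := (0 : E))).congr_of_eventuallyEq ?_
      filter_upwards [hL.isClosed.isOpen_compl.mem_nhds hx] with y hy
      simp [hcz y hy]
  have hcs : HasCompactSupport (fun x => c x • v x) :=
    HasCompactSupport.intro hL fun x hx => by simp [hcz x hx]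
  obtain ⟨K, hK⟩ := ContDiff.lipschitzWith_of_hasCompactSupport hcs hsm one_ne_zero
  obtain ⟨M, hM⟩ := hcs.exists_bound_of_continuous hsm.continuous
  exact ⟨c, hc, fun x hx => hcz x fun h => hx (hLO h),
    fun x h1 h2 => hc1 ⟨mem_closedBall_zero_iff.2 h1, h2⟩, K, M, hK, hM⟩

/-- The a priori estimates keep a trajectory of the cut-off field in the region where the field was
not changed. -/
lemma Good.exists_traj {f : E → ℂ} {R C s : ℝ} {v : E → E} (hv : Good f R C s v)
    (hf : DifferentiableOn ℂ f (ball 0 R)) (hC : 0 ≤ C) {x : E} (hx : x ∈ Om f R) :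
    ∃ γ, Traj f R v γ ∧ γ 0 = x := by
  have := FiniteDimensional.complete ℂ E
  have hfx : 0 < ‖f x‖ := norm_pos_iff.2 hx.2
  obtain ⟨c, hc, hc0, hc1, K, M, hK, hM⟩ := hv.cutoff hf.continuousOn hx.1
    (m := ‖f x‖ * Real.exp (-C)) (by positivity)
  obtain ⟨γ, h0, hγ⟩ := exists_trajectory hK hM x
  have hest := hv.estimates hf hC hc hc0 hγ (by rw [h0]; exact hx)
  rw [h0] at hest
  refine ⟨γ, fun t ht => ?_, h0⟩
  obtain ⟨h1, h2, h3⟩ := hest t ht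
  have h4 := hγ t ht
  rw [hc1 _ h1.le h2, one_smul] at h4
  refine ⟨h4, by rw [h1]; exact hx.1, fun h => ?_⟩
  rw [h, norm_zero] at h2
  have : 0 < ‖f x‖ * Real.exp (-C) := by positivity
  linarith

/-- Continuous dependence of the end point on the initial point, away from the zeros of `f`. -/
lemma Good.lipschitz {f : E → ℂ} {R C s ε m : ℝ} {v : E → E} (hv : Good f R C s v)
    (hf : DifferentiableOn ℂ f (ball 0 R)) (hC : 0 ≤ C) (hε : ε < R) (hm : 0 < m) :
    ∃ L : ℝ, ∀ γ₁ γ₂, Traj f R v γ₁ → Traj f R v γ₂ → ‖γ₁ 0‖ ≤ ε → ‖γ₂ 0‖ ≤ ε →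
      m ≤ ‖f (γ₁ 0)‖ → m ≤ ‖f (γ₂ 0)‖ → dist (γ₁ 1) (γ₂ 1) ≤ dist (γ₁ 0) (γ₂ 0) * L := by
  obtain ⟨c, hc, hc0, hc1, K, M, hK, hM⟩ := hv.cutoff hf.continuousOn hε
    (m := m * Real.exp (-C)) (by positivity)
  have key : ∀ γ, Traj f R v γ → ‖γ 0‖ ≤ ε → m ≤ ‖f (γ 0)‖ → ∀ t ∈ Icc (0 : ℝ) 1,
      HasDerivAt γ (c (γ t) • v (γ t)) t := fun γ hγ h1 h2 t ht => by
    obtain ⟨h3, h4, h5⟩ := hγ.estimates hv hf hC t ht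
    rw [hc1 _ (by rw [h3]; exact h1) (le_trans (by gcongr) h4), one_smul]
    exact (hγ t ht).1
  refine ⟨Real.exp (K * (1 - 0)), fun γ₁ γ₂ h1 h2 h3 h4 h5 h6 => ?_⟩
  have k1 := key γ₁ h1 h3 h5
  have k2 := key γ₂ h2 h4 h6
  exact dist_le_of_trajectories_ODE (v := fun _ x => c x • v x) (fun _ => hK)
    (fun t ht => (k1 t ht).continuousAt.continuousWithinAt)
    (fun t ht => (k1 t (Ico_subset_Icc_self ht)).hasDerivWithinAt)
    (fun t ht => (k2 t ht).continuousAt.continuousWithinAt)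
    (fun t ht => (k2 t (Ico_subset_Icc_self ht)).hasDerivWithinAt) le_rfl 1 (by simp)

/-- Trajectories starting near the zeros of `f` move little, uniformly on the ball of radius `ε`. -/
lemma Good.near_zero {f : E → ℂ} {R C s ε : ℝ} {v : E → E} (hv : Good f R C s v)
    (hf : DifferentiableOn ℂ f (ball 0 R)) (hC : 0 ≤ C) (hε : ε < R) {η : ℝ} (hη : 0 < η) :
    ∃ m > 0, ∀ γ, Traj f R v γ → ‖γ 0‖ ≤ ε → ‖f (γ 0)‖ < m → dist (γ 1) (γ 0) ≤ η := by
  have : ProperSpace E := FiniteDimensional.proper ℂ E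
  have hsub : closedBall (0 : E) ε ⊆ ball 0 R := closedBall_subset_ball hε
  obtain ⟨m, hm, hmv⟩ : ∃ m > 0, ∀ x, ‖x‖ ≤ ε → f x ≠ 0 → ‖f x‖ < m → ‖v x‖ ≤ η := by
    set W : Set E := interior {x | f x ≠ 0 → ‖v x‖ ≤ η}
    set A : Set E := closedBall 0 ε \ W
    have hA : IsCompact A := (isCompact_closedBall 0 ε).diff isOpen_interior
    have hAf : ∀ x ∈ A, f x ≠ 0 := fun x hx h => hx.2 (mem_interior_iff_mem_nhds.2
      (hv.small η hη x (mem_ball_zero_iff.1 (hsub hx.1)) h))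
    rcases A.eq_empty_or_nonempty with hAe | hAn
    · refine ⟨1, one_pos, fun x h1 h2 _ => ?_⟩
      by_contra h3
      have : x ∈ A := ⟨mem_closedBall_zero_iff.2 h1, fun h => h3 (interior_subset h h2)⟩
      rw [hAe] at this
      exact this
    · obtain ⟨y, hy, hmin⟩ := hA.exists_isMinOn hAn
        ((hf.continuousOn.mono (sdiff_subset.trans hsub)).norm)
      refine ⟨‖f y‖, norm_pos_iff.2 (hAf y hy), fun x h1 h2 h4 => ?_⟩
      by_contra h3
      have : x ∈ A := ⟨mem_closedBall_zero_iff.2 h1, fun h => h3 (interior_subset h h2)⟩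
      exact absurd (hmin this) (not_le.2 h4)
  refine ⟨m * Real.exp (-C), by positivity, fun γ hγ h1 h2 => ?_⟩
  rw [dist_eq_norm]
  refine norm_image_sub_le_of_norm_deriv_le_segment_01'
    (fun t ht => (hγ t ht).1.hasDerivWithinAt) fun t ht => ?_
  have ht' := Ico_subset_Icc_self ht
  obtain ⟨h3, h4, h5⟩ := hγ.estimates hv hf hC t ht'
  refine hmv _ (by rw [h3]; exact h1) (hγ t ht').2.2 (h5.trans_lt ?_)
  calc ‖f (γ 0)‖ * Real.exp C < m * Real.exp (-C) * Real.exp C := by gcongr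
    _ = m := by rw [mul_assoc, ← Real.exp_add]; simp

/-- The time one map of the flow of `v`, extended by the identity to the zeros of `f`. -/
lemma Good.exists_map {f : E → ℂ} {R C s ε : ℝ} {v : E → E} (hv : Good f R C s v)
    (hf : DifferentiableOn ℂ f (ball 0 R)) (hC : 0 ≤ C) (hε : ε < R) :
    ∃ Φ : E → E, ContinuousOn Φ (closedBall 0 ε) ∧ (∀ x ∈ closedBall 0 ε, f x = 0 → Φ x = x) ∧
      (∀ γ, Traj f R v γ → ‖γ 0‖ ≤ ε → Φ (γ 0) = γ 1) ∧
      ∀ x ∈ closedBall 0 ε, f x ≠ 0 → ∃ γ, Traj f R v γ ∧ γ 0 = x ∧ γ 1 = Φ x := by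
  classical
  have hsub : closedBall (0 : E) ε ⊆ ball 0 R := closedBall_subset_ball hε
  choose! Γ hΓ hΓ0 using fun x (hx : x ∈ Om f R) => hv.exists_traj hf hC hx
  have hOm : ∀ x ∈ closedBall (0 : E) ε, f x ≠ 0 → x ∈ Om f R := fun x hx h =>
    ⟨mem_ball_zero_iff.1 (hsub hx), h⟩
  set Φ : E → E := fun x => if f x = 0 then x else Γ x 1
  have hΦ0 : ∀ x, f x = 0 → Φ x = x := fun x hx => by simp [Φ, hx]
  have hΦ1 : ∀ x, f x ≠ 0 → Φ x = Γ x 1 := fun x hx => by simp [Φ, hx]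
  refine ⟨Φ, ?_, fun x _ hx => hΦ0 x hx, fun γ hγ h0 => ?_, fun x hx h =>
    ⟨Γ x, hΓ x (hOm x hx h), hΓ0 x (hOm x hx h), (hΦ1 x h).symm⟩⟩
  · intro x hx
    have hcf : ContinuousWithinAt f (closedBall 0 ε) x := (hf.continuousOn.mono hsub) x hx
    by_cases hfx : f x = 0
    · refine Metric.continuousWithinAt_iff'.2 fun η hη => ?_
      obtain ⟨m, hm, hmη⟩ := hv.near_zero hf hC hε (half_pos (half_pos hη))
      have h1 : ∀ᶠ y in 𝓝[closedBall 0 ε] x, ‖f y‖ < m := by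
        have := hcf.norm
        refine this.eventually_lt continuousWithinAt_const ?_
        simpa [hfx] using hm
      have h2 : ∀ᶠ y in 𝓝[closedBall 0 ε] x, dist y x < η / 2 :=
        nhdsWithin_le_nhds (ball_mem_nhds x (half_pos hη))
      filter_upwards [h1, h2, self_mem_nhdsWithin] with y h1 h2 h3
      rw [hΦ0 x hfx]
      by_cases hfy : f y = 0
      · rw [hΦ0 y hfy]; linarith
      · have hy := hOm y h3 hfy
        have := hmη (Γ y) (hΓ y hy) (by rw [hΓ0 y hy]; exact mem_closedBall_zero_iff.1 h3)
          (by rw [hΓ0 y hy]; exact h1)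
        rw [hΓ0 y hy] at this
        rw [hΦ1 y hfy]
        linarith [dist_triangle (Γ y 1) y x]
    · have hpos : 0 < ‖f x‖ := norm_pos_iff.2 hfx
      obtain ⟨L, hL⟩ := hv.lipschitz hf hC hε (half_pos hpos)
      have h1 : ∀ᶠ y in 𝓝[closedBall 0 ε] x, ‖f x‖ / 2 < ‖f y‖ :=
        continuousWithinAt_const.eventually_lt hcf.norm (by linarith)
      have hxO := hOm x hx hfx
      rw [ContinuousWithinAt, tendsto_iff_dist_tendsto_zero]
      have hlim : Tendsto (fun y => dist y x * L) (𝓝[closedBall 0 ε] x) (𝓝 0) := by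
        have : Continuous fun y => dist y x * L := by fun_prop
        have := (this.tendsto x).mono_left (nhdsWithin_le_nhds (s := closedBall 0 ε))
        simpa using this
      refine squeeze_zero' (Eventually.of_forall fun _ => dist_nonneg) ?_ hlim
      filter_upwards [h1, self_mem_nhdsWithin] with y h1 h3
      have hfy : f y ≠ 0 := norm_pos_iff.1 (by linarith)
      have hy := hOm y h3 hfy
      have := hL (Γ y) (Γ x) (hΓ y hy) (hΓ x hxO)
      rw [hΓ0 y hy, hΓ0 x hxO] at this
      rw [hΦ1 y hfy, hΦ1 x hfx]
      exact this (mem_closedBall_zero_iff.1 h3) (mem_closedBall_zero_iff.1 hx) h1.le (by linarith)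
  · have h1 := (hγ 0 (by simp)).2
    have hpos : 0 < ‖f (γ 0)‖ := norm_pos_iff.2 h1.2
    obtain ⟨L, hL⟩ := hv.lipschitz hf hC hε hpos
    have := hL (Γ (γ 0)) γ (hΓ _ h1) hγ
    rw [hΓ0 _ h1, dist_self, zero_mul] at this
    rw [hΦ1 _ h1.2]
    exact dist_le_zero.1 (this h0 h0 le_rfl le_rfl)

/-- The time-one maps of `v` and `-v` are inverse to each other, so they restrict to a homeomorphism
between sets `A` and `B` that correspond under turning the value of `f` by the angle `s`. -/
lemma Good.homeo {f : E → ℂ} {R C s ε : ℝ} {v : E → E} (hv : Good f R C s v)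
    (hv' : Good f R C (-s) (fun x => -v x))
    (hf : DifferentiableOn ℂ f (ball 0 R)) (hC : 0 ≤ C) (hε : ε < R) {A B : Set E}
    (hA : A ⊆ closedBall 0 ε) (hB : B ⊆ closedBall 0 ε)
    (hAB : ∀ x ∈ A, ∀ y ∈ closedBall 0 ε, (∃ r : ℝ, f y = r * f x * Complex.exp (s * Complex.I)) →
      y ∈ B)
    (hBA : ∀ x ∈ B, ∀ y ∈ closedBall 0 ε,
      (∃ r : ℝ, f y = r * f x * Complex.exp ((-s : ℝ) * Complex.I)) → y ∈ A) :
    Nonempty (A ≃ₜ B) := by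
  have aux : ∀ {s : ℝ} {v : E → E} {Φ Φ' : E → E}, Good f R C s v →
      (∀ x ∈ closedBall 0 ε, f x = 0 → Φ x = x) →
      (∀ x ∈ closedBall 0 ε, f x ≠ 0 → ∃ γ, Traj f R v γ ∧ γ 0 = x ∧ γ 1 = Φ x) →
      (∀ x ∈ closedBall 0 ε, f x = 0 → Φ' x = x) →
      (∀ γ, Traj f R (fun x => -v x) γ → ‖γ 0‖ ≤ ε → Φ' (γ 0) = γ 1) →
      ∀ x ∈ closedBall 0 ε, Φ x ∈ closedBall 0 ε ∧
        (∃ r : ℝ, f (Φ x) = r * f x * Complex.exp (s * Complex.I)) ∧ Φ' (Φ x) = x := by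
    intro s v Φ Φ' hv h0 h1 h0' h1' x hx
    by_cases hfx : f x = 0
    · rw [h0 x hx hfx]
      exact ⟨hx, ⟨0, by simp [hfx]⟩, h0' x hx hfx⟩
    · obtain ⟨γ, hγ, hγ0, hγ1⟩ := h1 x hx hfx
      have h2 := (hγ.estimates hv hf hC 1 (by simp)).1
      have h3 := hγ.arg hv hf
      rw [hγ0, hγ1] at h2 h3
      have h4 : Φ x ∈ closedBall (0 : E) ε := by
        rw [mem_closedBall_zero_iff, h2]; exact mem_closedBall_zero_iff.1 hx
      refine ⟨h4, h3, ?_⟩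
      have h5 := h1' _ hγ.reverse
      simp only [sub_zero, sub_self, hγ0, hγ1] at h5
      exact h5 (mem_closedBall_zero_iff.1 h4)
  obtain ⟨Φ, hΦ, hΦ0, hΦu, hΦ1⟩ := hv.exists_map hf hC hε
  obtain ⟨Φ', hΦ', hΦ0', hΦu', hΦ1'⟩ := hv'.exists_map hf hC hε
  have k := aux hv hΦ0 hΦ1 hΦ0' hΦu'
  have k' := aux hv' hΦ0' hΦ1' hΦ0 (by simpa using hΦu)
  refine ⟨{ toFun := fun x => ⟨Φ x, hAB x x.2 _ (k x (hA x.2)).1 (k x (hA x.2)).2.1⟩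
            invFun := fun x => ⟨Φ' x, hBA x x.2 _ (k' x (hB x.2)).1 (k' x (hB x.2)).2.1⟩
            left_inv := fun x => Subtype.ext (k x (hA x.2)).2.2
            right_inv := fun x => Subtype.ext (k' x (hB x.2)).2.2
            continuous_toFun := ?_
            continuous_invFun := ?_ }⟩
  · exact (continuousOn_iff_continuous_domRestrict.1 (hΦ.mono hA)).subtype_mk _
  · exact (continuousOn_iff_continuous_domRestrict.1 (hΦ'.mono hB)).subtype_mk _

end TimeOne

/-! ### Construction of the turning field -/

section Field

variable {E : Type} [NormedAddCommGroup E] [InnerProductSpace ℂ E]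

/-- The gradient of `arg f`, from the gradient `G` and the value `φ` of `f`. -/
noncomputable def gradArg (φ : ℂ) (G : E) : E := Complex.I • ((starRingEnd ℂ) φ)⁻¹ • G

/-- The component of `J` tangent to the sphere through `x` (for the real inner product). -/
noncomputable def tangPart (x J : E) : E := J - ((inner ℂ x J).re / ‖x‖ ^ 2) • x

/-- By the hypothesis `hM` the radial part of `J = gradArg φ G` has at most half the norm of `J`, so
the tangential part `T` satisfies `‖T‖² ≥ 3/4 ‖J‖²`, and `w = T / ‖T‖²` turns the argument with unit
speed. -/
lemma turning_vector {x G : E} {φ : ℂ} {Λ : E →L[ℂ] ℂ} (hx : x ≠ 0) (hφ : φ ≠ 0) (hΛ : Λ ≠ 0)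
    (hG : ∀ y, inner ℂ G y = Λ y) (hGn : ‖G‖ = ‖Λ‖)
    (hM : |(Λ x * (starRingEnd ℂ) φ).im| ≤ 1 / 2 * (‖x‖ * ‖Λ‖ * ‖φ‖)) :
    let T := tangPart x (gradArg φ G)
    let w := (‖T‖ ^ 2)⁻¹ • T
    T ≠ 0 ∧ (inner ℂ x w).re = 0 ∧ ‖w‖ * ‖Λ‖ ≤ 2 * ‖φ‖ ∧
      ∃ ρ : ℝ, |ρ| ≤ 2 ∧ Λ w = φ * (ρ + Complex.I) := by
  intro T w
  set J := gradArg φ G with hJ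
  have hxp : 0 < ‖x‖ := norm_pos_iff.2 hx
  have hφp : 0 < ‖φ‖ := norm_pos_iff.2 hφ
  have hΛp : 0 < ‖Λ‖ := norm_pos_iff.2 hΛ
  have hJy : ∀ y, inner ℂ J y = -Complex.I * (Λ y / φ) := fun y => by
    rw [hJ, gradArg, inner_smul_left, inner_smul_left, hG]
    simp
    field_simp
  have hJn : ‖J‖ * ‖φ‖ = ‖Λ‖ := by
    rw [hJ, gradArg, norm_smul, norm_smul, hGn]
    simp
    field_simp
  have hJp : 0 < ‖J‖ := by
    by_contra h
    have : ‖J‖ = 0 := le_antisymm (not_lt.1 h) (norm_nonneg _)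
    rw [this, zero_mul] at hJn
    linarith
  set b := (inner ℂ x J).re with hb
  have hsym : (inner ℂ J x).re = b := by
    rw [hb, ← inner_conj_symm, Complex.conj_re]
  have hbJ : |b| ≤ 1 / 2 * (‖x‖ * ‖J‖) := by
    have h1 : (inner ℂ J x).re * ‖φ‖ ^ 2 = (Λ x * (starRingEnd ℂ) φ).im := by
      have : Λ x / φ * ((‖φ‖ ^ 2 : ℝ) : ℂ) = Λ x * (starRingEnd ℂ) φ := by
        rw [← Complex.normSq_eq_norm_sq, ← Complex.mul_conj]
        field_simp
      rw [← this, Complex.im_mul_ofReal, hJy]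
      simp
    rw [← h1, hsym, abs_mul, abs_of_nonneg (sq_nonneg ‖φ‖), ← hJn] at hM
    have : |b| * ‖φ‖ ^ 2 ≤ 1 / 2 * (‖x‖ * ‖J‖) * ‖φ‖ ^ 2 := by
      refine hM.trans (le_of_eq ?_); ring
    exact le_of_mul_le_mul_right this (by positivity)
  have hT : T = J - ((b / ‖x‖ ^ 2 : ℝ) : ℂ) • x := by
    simp only [T, tangPart, Complex.coe_smul, hb, hJ]
  have hxT : (inner ℂ x T).re = 0 := by
    rw [hT, inner_sub_right, inner_smul_right, Complex.sub_re, Complex.re_ofReal_mul,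
      inner_self_eq_norm_sq_to_K, ← hb]
    have : ((((‖x‖ : ℝ) : ℂ)) ^ 2).re = ‖x‖ ^ 2 := by
      rw [← Complex.ofReal_pow, Complex.ofReal_re]
    erw [this]
    field_simp
    ring
  have hJT : (inner ℂ J T).re = ‖J‖ ^ 2 - b ^ 2 / ‖x‖ ^ 2 := by
    rw [hT, inner_sub_right, inner_smul_right, Complex.sub_re, Complex.re_ofReal_mul,
      inner_self_eq_norm_sq_to_K, hsym]
    have : ((((‖J‖ : ℝ) : ℂ)) ^ 2).re = ‖J‖ ^ 2 := by
      rw [← Complex.ofReal_pow, Complex.ofReal_re]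
    erw [this]
    field_simp
  have hTT : ‖T‖ ^ 2 = (inner ℂ J T).re := by
    have h1 : (inner ℂ T T).re = ‖T‖ ^ 2 := inner_self_eq_norm_sq (𝕜 := ℂ) T
    rw [← h1]
    nth_rewrite 1 [hT]
    rw [inner_sub_left, inner_smul_left, Complex.sub_re, Complex.conj_ofReal,
      Complex.re_ofReal_mul, hxT]
    ring
  have hTlow : 3 / 4 * ‖J‖ ^ 2 ≤ ‖T‖ ^ 2 := by
    have h1 : b ^ 2 ≤ (1 / 2 * (‖x‖ * ‖J‖)) ^ 2 := sq_le_sq' (neg_le_of_abs_le hbJ)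
      (le_of_abs_le hbJ)
    have h2 : b ^ 2 / ‖x‖ ^ 2 ≤ 1 / 4 * ‖J‖ ^ 2 := by
      rw [div_le_iff₀ (by positivity)]
      refine h1.trans (le_of_eq ?_); ring
    rw [hTT, hJT]; linarith
  have hTp : 0 < ‖T‖ := by
    have : 0 < ‖T‖ ^ 2 := lt_of_lt_of_le (by positivity) hTlow
    exact (norm_nonneg T).lt_of_ne fun h => by simp [← h] at this
  have hTJ : ‖J‖ ≤ 2 * ‖T‖ := by
    refine le_of_sq_le_sq ?_ (by positivity)
    nlinarith [sq_nonneg ‖J‖]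
  have hwc : w = (((‖T‖ ^ 2)⁻¹ : ℝ) : ℂ) • T := by
    simp only [w, Complex.coe_smul]
  have hwn : ‖w‖ * ‖J‖ ≤ 2 := by
    rw [hwc, norm_smul, Complex.norm_real, Real.norm_of_nonneg (by positivity)]
    have : (‖T‖ ^ 2)⁻¹ * ‖T‖ * ‖J‖ = ‖J‖ / ‖T‖ := by field_simp
    rw [this, div_le_iff₀ hTp]
    exact hTJ
  have hJw : (inner ℂ J w).re = 1 := by
    rw [hwc, inner_smul_right, Complex.re_ofReal_mul, ← hTT]
    field_simp
  refine ⟨norm_pos_iff.1 hTp, ?_, ?_, -(inner ℂ J w).im, ?_, ?_⟩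
  · rw [hwc, inner_smul_right, Complex.re_ofReal_mul, hxT, mul_zero]
  · rw [← hJn, ← mul_assoc]
    gcongr
  · rw [abs_neg]
    refine (Complex.abs_im_le_norm _).trans ((norm_inner_le_norm J w).trans ?_)
    rw [mul_comm]; exact hwn
  · have h1 : Λ w = φ * (Complex.I * inner ℂ J w) := by
      rw [hJy]
      field_simp
      linear_combination Λ w * Complex.I_sq
    have h2 : inner ℂ J w = 1 + (inner ℂ J w).im * Complex.I := by
      conv_lhs => rw [← Complex.re_add_im (inner ℂ J w), hJw]
      simp
    rw [h1]
    conv_lhs => rw [h2]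
    push_cast
    linear_combination φ * (inner ℂ J w).im * Complex.I_sq

variable [FiniteDimensional ℂ E]

/-- The complex gradient of `f`, representing `fderiv ℂ f x` through the inner product. -/
noncomputable def grad (f : E → ℂ) (x : E) : E :=
  ∑ i, (starRingEnd ℂ) (fderiv ℂ f x (stdOrthonormalBasis ℂ E i)) • stdOrthonormalBasis ℂ E i

lemma inner_grad (f : E → ℂ) (x y : E) : inner ℂ (grad f x) y = fderiv ℂ f x y := by
  conv_rhs => rw [← (stdOrthonormalBasis ℂ E).sum_repr' y]
  rw [grad, sum_inner, map_sum]
  refine Finset.sum_congr rfl fun i _ => ?_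
  rw [inner_smul_left, map_smul, smul_eq_mul, mul_comm]
  simp

lemma norm_grad (f : E → ℂ) (x : E) : ‖grad f x‖ = ‖fderiv ℂ f x‖ := by
  rw [← innerSL_apply_norm ℂ (grad f x)]
  congr 1
  ext y
  simp [inner_grad]

lemma contDiffOn_fderiv_apply {f : E → ℂ} {O : Set E} (hO : IsOpen O)
    (hf : DifferentiableOn ℂ f O) (y : E) : ContDiffOn ℝ 1 (fun x => fderiv ℂ f x y) O := by
  have hH : ∀ x ∈ O, Hol f x := fun x hx => by
    filter_upwards [hO.mem_nhds hx] with z hz using (hf z hz).differentiableAt (hO.mem_nhds hz)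
  have : ContDiffOn ℂ (0 + 1) (fun x => fderiv ℂ f x y) O := by
    rw [contDiffOn_succ_iff_fderiv_of_isOpen hO]
    refine ⟨fun x hx => ((hH x hx).fderiv_apply y).diff.differentiableWithinAt, by simp, ?_⟩
    rw [contDiffOn_zero]
    exact fun x hx => ((hH x hx).fderiv_apply y).continuousAt_fderiv.continuousWithinAt
  rw [zero_add] at this
  exact this.restrict_scalars ℝ

lemma contDiffOn_self {f : E → ℂ} {O : Set E} (hO : IsOpen O)
    (hf : DifferentiableOn ℂ f O) : ContDiffOn ℝ 1 f O := by
  have hH : ∀ x ∈ O, Hol f x := fun x hx => by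
    filter_upwards [hO.mem_nhds hx] with z hz using (hf z hz).differentiableAt (hO.mem_nhds hz)
  have : ContDiffOn ℂ (0 + 1) f O := by
    rw [contDiffOn_succ_iff_fderiv_of_isOpen hO]
    refine ⟨hf, by simp, ?_⟩
    rw [contDiffOn_zero]
    exact fun x hx => (hH x hx).continuousAt_fderiv.continuousWithinAt
  rw [zero_add] at this
  exact this.restrict_scalars ℝ

/-- Existence of the turning field: `s • w` turns `arg f` with speed `s`, for every `s`. -/
lemma exists_good {f : E → ℂ} (hf : Hol f 0) (hf0 : f 0 = 0) {N : Set E} (hN : N ∈ 𝓝 0) :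
    ∃ R > 0, ball 0 R ⊆ N ∧ DifferentiableOn ℂ f (ball 0 R) ∧
      ∃ w : E → E, ∀ s : ℝ, Good f R (2 * |s|) s (fun x => s • w x) := by
  have hev := hf.and ((im_fderiv_self_le hf hf0 (half_pos one_pos)).and
    ((loja hf hf0 1).and hN))
  obtain ⟨R, hR, hball⟩ := Metric.eventually_nhds_iff_ball.1 hev
  have hfd : DifferentiableOn ℂ f (ball 0 R) := fun x hx =>
    (hball x hx).1.differentiableWithinAt
  have hO : IsOpen (Om f R) := isOpen_Om hfd.continuousOn
  have hOb : Om f R ⊆ ball 0 R := fun x hx => mem_ball_zero_iff.2 hx.1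
  have hfO := hfd.mono hOb
  set T : E → E := fun x => tangPart x (gradArg (f x) (grad f x)) with hT
  set w : E → E := fun x => (‖T x‖ ^ 2)⁻¹ • T x with hw
  have hx0 : ∀ x ∈ Om f R, x ≠ 0 := fun x hx h => hx.2 (by rw [h, hf0])
  have key : ∀ x ∈ Om f R, T x ≠ 0 ∧ (inner ℂ x (w x)).re = 0 ∧
      ‖w x‖ * ‖fderiv ℂ f x‖ ≤ 2 * ‖f x‖ ∧
      ∃ ρ : ℝ, |ρ| ≤ 2 ∧ fderiv ℂ f x (w x) = f x * (ρ + Complex.I) := fun x hx => by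
    obtain ⟨-, h2, h3, -⟩ := hball x (hOb hx)
    have h3 := h3 hx.2
    rw [one_mul] at h3
    exact turning_vector (hx0 x hx) hx.2
      (norm_pos_iff.1 ((norm_pos_iff.2 hx.2).trans_le h3)) (inner_grad f x) (norm_grad f x)
      (h2 hx.2)
  have hconj : ∀ {h : E → ℂ}, ContDiffOn ℝ 1 h (Om f R) →
      ContDiffOn ℝ 1 (fun x => (starRingEnd ℂ) (h x)) (Om f R) := fun hh =>
    Complex.conjCLE.contDiff.comp_contDiffOn hh
  have hgrad : ContDiffOn ℝ 1 (grad f) (Om f R) :=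
    ContDiffOn.sum fun i _ => (hconj (contDiffOn_fderiv_apply hO hfO _)).smul contDiffOn_const
  have hJ : ContDiffOn ℝ 1 (fun x => gradArg (f x) (grad f x)) (Om f R) :=
    contDiffOn_const.smul (((hconj (contDiffOn_self hO hfO)).inv fun x hx => by
      simpa using hx.2).smul hgrad)
  have hTs : ContDiffOn ℝ 1 T (Om f R) := by
    have h1 : ContDiffOn ℝ 1 (fun x : E => ‖x‖ ^ 2) (Om f R) := contDiffOn_id.norm_sq ℂ
    have h2 : ContDiffOn ℝ 1 (fun x => (inner ℂ x (gradArg (f x) (grad f x))).re) (Om f R) :=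
      Complex.reCLM.contDiff.comp_contDiffOn (contDiffOn_id.inner ℂ hJ)
    have h3 : ContDiffOn ℝ 1 (fun x => (inner ℂ x (gradArg (f x) (grad f x))).re / ‖x‖ ^ 2)
        (Om f R) := h2.div h1 fun x hx => pow_ne_zero 2 (norm_ne_zero_iff.2 (hx0 x hx))
    exact hJ.sub (h3.smul contDiffOn_id)
  have hws : ContDiffOn ℝ 1 w (Om f R) :=
    ((hTs.norm_sq ℂ).inv fun x hx => pow_ne_zero 2 (norm_ne_zero_iff.2 (key x hx).1)).smul hTs
  refine ⟨R, hR, fun x hx => (hball x hx).2.2.2, hfd, w, fun s => ⟨?_, ?_, ?_, ?_⟩⟩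
  · exact contDiffOn_const.smul hws
  · intro x hx
    rw [← Complex.coe_smul, inner_smul_right, Complex.re_ofReal_mul, (key x hx).2.1, mul_zero]
  · intro x hx
    obtain ⟨ρ, h1, h2⟩ := (key x hx).2.2.2
    refine ⟨s * ρ, ?_, ?_⟩
    · rw [abs_mul, mul_comm]
      gcongr
    · rw [← Complex.coe_smul, map_smul, h2, smul_eq_mul]
      push_cast
      ring
  · intro η hη p hp hfp
    have hpb : p ∈ ball (0 : E) R := mem_ball_zero_iff.2 hp
    have hfH : Hol f p := by
      filter_upwards [isOpen_ball.mem_nhds hpb] with z hz using (hball z hz).1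
    filter_upwards [isOpen_ball.mem_nhds hpb, loja hfH hfp (2 * |s| / η)] with x hx1 hx2 hx3
    have hxO : x ∈ Om f R := ⟨mem_ball_zero_iff.1 hx1, hx3⟩
    have h1 := hx2 hx3
    have h2 := (key x hxO).2.2.1
    have h3 : 0 < ‖fderiv ℂ f x‖ := by
      have := (hball x hx1).2.2.1 hx3
      rw [one_mul] at this
      exact (norm_pos_iff.2 hx3).trans_le this
    rw [norm_smul, Real.norm_eq_abs]
    rw [div_mul_eq_mul_div, div_le_iff₀ hη] at h1
    refine le_of_mul_le_mul_right ?_ h3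
    calc |s| * ‖w x‖ * ‖fderiv ℂ f x‖ = |s| * (‖w x‖ * ‖fderiv ℂ f x‖) := by ring
      _ ≤ |s| * (2 * ‖f x‖) := by gcongr
      _ ≤ η * ‖fderiv ℂ f x‖ := by linarith

end Field

/-! ### Homeomorphism of the members of the pencil -/

theorem stmt_8 (n : ℕ) (hn : 1 ≤ n)
    (U : Set (EuclideanSpace ℂ (Fin n))) (hU : IsOpen U)
    (h0U : (0 : EuclideanSpace ℂ (Fin n)) ∈ U)
    (f : EuclideanSpace ℂ (Fin n) → ℂ) (hf : DifferentiableOn ℂ f U) (hf0 : f 0 = 0)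
    (hfnz : ∀ W ∈ nhds (0 : EuclideanSpace ℂ (Fin n)), ∃ x ∈ W ∩ U, f x ≠ 0) :
    ∃ ε₀ > (0 : ℝ), Metric.closedBall (0 : EuclideanSpace ℂ (Fin n)) ε₀ ⊆ U ∧
      ∀ ε : ℝ, 0 < ε → ε ≤ ε₀ → ∀ θ₁ θ₂ : ℝ,
        Nonempty
          (((Xset U f θ₁ ∩ Metric.closedBall (0 : EuclideanSpace ℂ (Fin n)) ε) : Set _) ≃ₜ
           ((Xset U f θ₂ ∩ Metric.closedBall (0 : EuclideanSpace ℂ (Fin n)) ε) : Set _)) := by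
  have hH : Hol f 0 := by
    filter_upwards [hU.mem_nhds h0U] with x hx using (hf x hx).differentiableAt (hU.mem_nhds hx)
  obtain ⟨R, hR, hRU, hfR, w, hw⟩ := exists_good hH hf0 (hU.mem_nhds h0U)
  refine ⟨R / 2, half_pos hR,
    (closedBall_subset_ball (half_lt_self hR)).trans hRU, fun ε _ hε θ₁ θ₂ => ?_⟩
  have hεR : ε < R := by linarith
  have hεU : closedBall (0 : EuclideanSpace ℂ (Fin n)) ε ⊆ U :=
    (closedBall_subset_ball hεR).trans hRU
  have hrev : Good f R (2 * |θ₂ - θ₁|) (-(θ₂ - θ₁)) (fun x => -((θ₂ - θ₁) • w x)) := by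
    have := hw (-(θ₂ - θ₁))
    simpa only [abs_neg, neg_smul] using this
  have move : ∀ {α β σ : ℝ}, α + σ = β → ∀ x ∈ Xset U f α ∩ closedBall 0 ε,
      ∀ y ∈ closedBall (0 : EuclideanSpace ℂ (Fin n)) ε,
      (∃ r : ℝ, f y = r * f x * Complex.exp (σ * Complex.I)) →
        y ∈ Xset U f β ∩ closedBall 0 ε := by
    rintro α β σ rfl x ⟨⟨-, t, ht⟩, -⟩ y hy ⟨r, hr⟩
    refine ⟨⟨hεU hy, r * t, ?_⟩, hy⟩
    rw [hr, ht]
    push_cast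
    rw [add_mul, Complex.exp_add]
    ring
  exact (hw (θ₂ - θ₁)).homeo hrev hfR (by positivity) hεR inter_subset_right inter_subset_right
    (move (by ring)) (move (by ring))
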